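/- arXiv:math/0205251 — 4 statements merged into one kernel-verified Lean document; each statement's English description precedes it below -/
import Mathlib

section
/- Let x, y, z, w satisfy Conditions BP1–BP5 for some d ∈ {n−2, n−1} with d ≥ 0. Then the degree-(d+2n) graded piece of I² equals that of its saturation: every homogeneous polynomial f of degree d+2n such that ⟨s,t,u⟩^k · f ⊆ I² for some k ≥ 0 already lies in I². -/
/-!
Write `m = ⟨s, t, u⟩`, `I = ⟨x, y, z, w⟩`, `J = ⟨x, y, z⟩`. Since `w ∈ sat(J)`, the ideals
`I` and `J` agree locally away from the origin.

**Reduction to a generic pair.** At each base point the local complete intersection condition gives a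
homogeneous syzygy of `x, y, z` which does not vanish there (`exists_homog_syzygy`). There are
finitely many base points, so for generic `λ, μ` the polynomials `x' = x + λ z`, `y' = y + μ z` are coprime
(`finite_not_relPrime`) and every such syzygy, rewritten for `x', y', z`, has a coefficient of `z`
which does not vanish at its base point (`exists_generic`). These coefficients lie in the colon ideal
`H = (x', y') : z`, so by the Nullstellensatz `J + H` contains a power of `m`. Replacing `x, y` by
`x', y'` changes neither `I` nor `J`.

**The coprime case** (`core`). Let `Q = (x, y)` with `x, y` coprime and let `m ^ M ⊆ J + H` with
`H ⊆ Q : z`. The ideal `Q` is saturated (`mem_of_X_pow_mul_mem`), hence `z` is a nonzerodivisor on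
`sat(J) / Q`. The Hilbert function of `R / Q` is `n ^ 2` in degree `d + n` and in all large degrees,
because `d ∈ {n - 2, n - 1}`, and the one of `R / I` equals `D` in the same degrees. By this count
multiplication by `z ^ j` is bijective from `(I / Q)_{d+n}` to `(I / Q)_{d+n+jn}` for large `j`
(`exists_lift`). In particular `sat(J)` and `I` agree in degree `d + n`.

Let `f` be homogeneous of degree `d + 2n` in `sat(I ^ 2)`. Lifting `z ^ j f` and cancelling `z ^ j`
gives `f = z g + a x + b y` with `g ∈ I` and `a, b` homogeneous of degree `d + n`. Then `a x + b y`
lies in `sat(I ^ 2)`; locally at the base points `I = Q`, and quasi-regularity of the pair `x, y`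
(`mem_of_mem_sq`) shows `a, b ∈ sat(J)`. Their degree forces `a, b ∈ I`, so `f ∈ I ^ 2`.
-/

open MvPolynomial

/-- `R3` is the polynomial ring `ℂ[s,t,u]`. -/
abbrev R3 : Type := MvPolynomial (Fin 3) ℂ

/-- `quotDim I k` is the dimension of the degree-`k` graded piece of `R/I`. -/
noncomputable def quotDim (I : Ideal R3) (k : ℕ) : ℕ :=
  Module.finrank ℂ
    ((homogeneousSubmodule (Fin 3) ℂ k).map (Ideal.Quotient.mkₐ ℂ I).toLinearMap)

/-- The saturation of `J` with respect to the irrelevant ideal `⟨s,t,u⟩`: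
`{f | ⟨s,t,u⟩^k · f ⊆ J for some k}`. -/
def satSet (J : Ideal R3) : Set R3 :=
  {f | ∃ k : ℕ, ∀ g ∈ (Ideal.span {X 0, X 1, X 2} : Ideal R3) ^ k, g * f ∈ J}

/-- `I` is a local complete intersection: at each minimal prime `𝔭` over `I`, the
ideal generated by `I` in the localization `R_𝔭` is generated by two elements. -/
def IsLCI (I : Ideal R3) : Prop :=
  ∀ 𝔭 ∈ I.minimalPrimes, ∀ h𝔭 : 𝔭.IsPrime,
    letI := h𝔭
    ∃ a b : Localization.AtPrime 𝔭,
      Ideal.map (algebraMap R3 (Localization.AtPrime 𝔭)) I = Ideal.span {a, b}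

/-- The set of common zeros of `ps` in `ℂ³ ∖ {0}` viewed in the projectivization of `ℂ³`. -/
def projVanish (ps : Set R3) : Set (Projectivization ℂ (Fin 3 → ℂ)) :=
  {q | ∃ (v : Fin 3 → ℂ) (hv : v ≠ 0), q = Projectivization.mk ℂ v hv ∧
        ∀ p ∈ ps, MvPolynomial.eval v p = 0}

/-! ### Ideals generated by two coprime forms -/

/-- Multiplication by a homogeneous polynomial commutes with taking homogeneous components. -/
lemma hcomp_mul {x : R3} {n : ℕ} (hx : x.IsHomogeneous n) (a : R3) (i : ℕ) :
    homogeneousComponent (i + n) (a * x) = homogeneousComponent i a * x := by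
  have h : ∀ j, homogeneousComponent (i + n) (homogeneousComponent j a * x) =
      homogeneousComponent i (homogeneousComponent j a) * x := by
    intro j
    have hj := homogeneousComponent_isHomogeneous j a
    rw [homogeneousComponent_of_mem (hj.mul hx), homogeneousComponent_of_mem hj]
    by_cases hij : i = j <;> simp [hij]
  conv_lhs => rw [← sum_homogeneousComponent a, Finset.sum_mul, map_sum]
  conv_rhs => rw [← sum_homogeneousComponent a, map_sum, Finset.sum_mul]
  exact Finset.sum_congr rfl fun j _ => h j

lemma exists_homog_pair {x y f : R3} {n e : ℕ} (hx : x.IsHomogeneous n) (hy : y.IsHomogeneous n)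
    (hf : f.IsHomogeneous (e + n)) (h : f ∈ Ideal.span {x, y}) :
    ∃ a b : R3, a.IsHomogeneous e ∧ b.IsHomogeneous e ∧ a * x + b * y = f := by
  obtain ⟨a, b, hab⟩ := Ideal.mem_span_pair.1 h
  refine ⟨homogeneousComponent e a, homogeneousComponent e b,
    homogeneousComponent_isHomogeneous _ _, homogeneousComponent_isHomogeneous _ _, ?_⟩
  rw [← hcomp_mul hx, ← hcomp_mul hy, ← map_add, hab, homogeneousComponent_eq_self hf]

/-- `u ^ K` is a nonzerodivisor modulo `(s ^ K, t ^ K)`. -/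
lemma mem_span_of_X_pow_mul {K : ℕ} {ρ : R3}
    (h : X 2 ^ K * ρ ∈ Ideal.span ({X 0 ^ K, X 1 ^ K} : Set R3)) :
    ρ ∈ Ideal.span ({X 0 ^ K, X 1 ^ K} : Set R3) := by
  have key : (Ideal.span ({X 0 ^ K, X 1 ^ K} : Set R3)) =
      Ideal.span ((fun s => monomial s (1 : ℂ)) ''
        ({Finsupp.single 0 K, Finsupp.single 1 K} : Set (Fin 3 →₀ ℕ))) := by
    rw [Set.image_pair, ← X_pow_eq_monomial, ← X_pow_eq_monomial]
  rw [key, mem_ideal_span_monomial_image] at h ⊢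
  intro m hm
  have : m + Finsupp.single 2 K ∈ (X 2 ^ K * ρ : R3).support := by
    rw [mem_support_iff, X_pow_eq_monomial, add_comm, coeff_monomial_mul, one_mul]
    exact mem_support_iff.1 hm
  obtain ⟨s, hs, hle⟩ := h _ this
  refine ⟨s, hs, ?_⟩
  rcases hs with rfl | rfl <;>
  · rw [Finsupp.single_le_iff] at hle ⊢
    simpa using hle

lemma X_pow_isRelPrime (K : ℕ) : IsRelPrime (X 0 ^ K : R3) (X 1 ^ K) := by
  apply IsRelPrime.pow
  rw [UniqueFactorizationMonoid.isRelPrime_iff_no_prime_factors (X_ne_zero _)]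
  intro p h0 h1 hp
  have h :=
    (hp.irreducible.associated_of_dvd (X_prime (R := ℂ) (i := (0 : Fin 3))).irreducible h0).symm.dvd
  simpa using X_dvd_X.1 (h.trans h1)

/-- An ideal generated by two coprime polynomials in three variables is saturated: comparing the
expressions of `s^K a`, `t^K a`, `u^K a` as combinations of `x, y` and using that
`s^K, t^K, u^K` is a regular sequence lets one divide the first of them by `s^K`. -/
lemma mem_of_X_pow_mul_mem {x y a : R3} (hxy : IsRelPrime x y) (hy0 : y ≠ 0) {K : ℕ}
    (h : ∀ i, X i ^ K * a ∈ Ideal.span {x, y}) : a ∈ Ideal.span {x, y} := by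
  have cancel : ∀ p q : R3, p * x = q * y → ∃ r, p = r * y ∧ q = r * x := by
    intro p q hpq
    obtain ⟨r, rfl⟩ : y ∣ p := hxy.symm.dvd_of_dvd_mul_right ⟨q, by rw [hpq]; ring⟩
    exact ⟨r, mul_comm _ _, mul_right_cancel₀ hy0 (by rw [← hpq]; ring)⟩
  obtain ⟨a0, b0, h0⟩ := Ideal.mem_span_pair.1 (h 0)
  obtain ⟨a1, b1, h1⟩ := Ideal.mem_span_pair.1 (h 1)
  obtain ⟨a2, b2, h2⟩ := Ideal.mem_span_pair.1 (h 2)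
  obtain ⟨ρ, hρ, hρ'⟩ := cancel (X 1 ^ K * a0 - X 0 ^ K * a1) (X 0 ^ K * b1 - X 1 ^ K * b0) (by
    linear_combination X 1 ^ K * h0 - X 0 ^ K * h1)
  obtain ⟨σ, hσ, hσ'⟩ := cancel (X 2 ^ K * a0 - X 0 ^ K * a2) (X 0 ^ K * b2 - X 2 ^ K * b0) (by
    linear_combination X 2 ^ K * h0 - X 0 ^ K * h2)
  obtain ⟨τ, hτ, hτ'⟩ := cancel (X 2 ^ K * a1 - X 1 ^ K * a2) (X 1 ^ K * b2 - X 2 ^ K * b1) (by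
    linear_combination X 2 ^ K * h1 - X 1 ^ K * h2)
  have hrel : X 2 ^ K * ρ = (-τ) * X 0 ^ K + σ * X 1 ^ K := by
    apply mul_right_cancel₀ hy0
    linear_combination - X 2 ^ K * hρ + X 1 ^ K * hσ - X 0 ^ K * hτ
  obtain ⟨r', r, hr⟩ := Ideal.mem_span_pair.1
    (mem_span_of_X_pow_mul (Ideal.mem_span_pair.2 ⟨_, _, hrel.symm⟩))
  have d1 : X 0 ^ K ∣ a0 - r * y := by
    refine (X_pow_isRelPrime K).dvd_of_dvd_mul_left ⟨a1 + r' * y, ?_⟩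
    linear_combination hρ - y * hr
  have d2 : X 0 ^ K ∣ b0 + r * x := by
    refine (X_pow_isRelPrime K).dvd_of_dvd_mul_left ⟨b1 - r' * x, ?_⟩
    linear_combination -hρ' + x * hr
  obtain ⟨c1, hc1⟩ := d1
  obtain ⟨c2, hc2⟩ := d2
  refine Ideal.mem_span_pair.2 ⟨c1, c2, ?_⟩
  apply mul_left_cancel₀ (pow_ne_zero K (X_ne_zero (R := ℂ) (0 : Fin 3)))
  linear_combination h0 - x * hc1 - y * hc2

/-- Quasi-regularity of a coprime pair: if `c x + d y` lies in the square of the ideal `(x, y)`,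
then `c` lies in `(x, y)`. -/
lemma mem_of_mem_sq {x y c d : R3} (hxy : IsRelPrime x y)
    (h : c * x + d * y ∈ Ideal.span {x, y} * Ideal.span {x, y}) : c ∈ Ideal.span {x, y} := by
  rw [Ideal.span_pair_mul_span_pair, Ideal.mem_span_insert] at h
  obtain ⟨e1, q, hq, h⟩ := h
  obtain ⟨e2, e3, e4, rfl⟩ := Submodule.mem_span_triple.1 hq
  simp only [smul_eq_mul] at h
  have hd : y ∣ c - e1 * x - e2 * y := by
    refine hxy.symm.dvd_of_dvd_mul_right ⟨e3 * x + e4 * y - d, ?_⟩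
    linear_combination h
  obtain ⟨r, hr⟩ := hd
  exact Ideal.mem_span_pair.2 ⟨e1, e2 + r, by linear_combination -hr⟩

/-! ### Hilbert function estimates -/

/-- The degree-`k` piece of an ideal, as a complex vector space. -/
noncomputable def idealPiece (I : Ideal R3) (k : ℕ) : Submodule ℂ R3 :=
  homogeneousSubmodule (Fin 3) ℂ k ⊓ I.restrictScalars ℂ

lemma mem_idealPiece {I : Ideal R3} {k : ℕ} {f : R3} :
    f ∈ idealPiece I k ↔ f.IsHomogeneous k ∧ f ∈ I := Iff.rfl

instance finite_homog (k : ℕ) : Module.Finite ℂ (homogeneousSubmodule (Fin 3) ℂ k) :=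
  Module.Finite.iff_fg.2 (homogeneousSubmodule_fg _ _ _)

instance finite_idealPiece (I : Ideal R3) (k : ℕ) : Module.Finite ℂ (idealPiece I k) :=
  Submodule.finiteDimensional_of_le (inf_le_left : idealPiece I k ≤ _)

lemma finrank_homog (k : ℕ) :
    Module.finrank ℂ (homogeneousSubmodule (Fin 3) ℂ k) = (k + 2).choose 2 := by
  have hset : {d : Fin 3 →₀ ℕ | d.degree = k} =
      ((Finset.univ : Finset (Fin 3)).finsuppAntidiag k : Set (Fin 3 →₀ ℕ)) := by
    ext d
    simp [Finset.mem_finsuppAntidiag, Finsupp.degree_eq_sum]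
  have e : homogeneousSubmodule (Fin 3) ℂ k ≃ₗ[ℂ]
      ({d : Fin 3 →₀ ℕ | d.degree = k} →₀ ℂ) :=
    (LinearEquiv.ofEq _ _ (homogeneousSubmodule_eq_finsupp_supported (Fin 3) ℂ k)).trans
      (AddMonoidAlgebra.supportedEquivFinsupp (R := ℂ) (S := ℂ) _)
  rw [hset] at e
  rw [e.finrank_eq, Module.finrank_finsupp_self]
  simp [Finset.card_finsuppAntidiag_nat_eq_choose]
  rw [add_comm 2 k]
  exact (Nat.choose_symm_add (a := k) (b := 2))

lemma quotDim_add_finrank (I : Ideal R3) (k : ℕ) :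
    quotDim I k + Module.finrank ℂ (idealPiece I k) = (k + 2).choose 2 := by
  rw [← finrank_homog]
  set f := (Ideal.Quotient.mkₐ ℂ I).toLinearMap
  have h := (f.domRestrict (homogeneousSubmodule (Fin 3) ℂ k)).finrank_range_add_finrank_ker
  rw [LinearMap.range_domRestrict] at h
  rw [← h, quotDim]
  congr 1
  have hk : LinearMap.ker (f.domRestrict (homogeneousSubmodule (Fin 3) ℂ k)) =
      (idealPiece I k).comap (homogeneousSubmodule (Fin 3) ℂ k).subtype := by
    ext p
    simp [f, mem_idealPiece, Ideal.Quotient.eq_zero_iff_mem]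
    intro _
    exact p.2
  rw [hk]
  exact (Submodule.comapSubtypeEquivOfLe (inf_le_left : idealPiece I k ≤ _)).finrank_eq.symm

lemma finrank_map_mul {p : R3} (hp : p ≠ 0) (V : Submodule ℂ R3) :
    Module.finrank ℂ (V.map (LinearMap.mulLeft ℂ p)) = Module.finrank ℂ V :=
  (Submodule.equivMapOfInjective _ (fun _ _ h => mul_left_cancel₀ hp h) V).finrank_eq.symm

/-- The trivial upper bound for the dimension of a graded piece of `(x, y)`. -/
lemma finrank_piece_le {x y : R3} {n e : ℕ} (hx : x.IsHomogeneous n) (hy : y.IsHomogeneous n) :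
    Module.finrank ℂ (idealPiece (Ideal.span {x, y}) (e + n)) ≤ 2 * (e + 2).choose 2 := by
  set V := homogeneousSubmodule (Fin 3) ℂ e
  have hle : idealPiece (Ideal.span {x, y}) (e + n) ≤
      V.map (LinearMap.mulLeft ℂ x) ⊔ V.map (LinearMap.mulLeft ℂ y) := by
    rintro f ⟨hf, hf'⟩
    obtain ⟨a, b, ha, hb, rfl⟩ := exists_homog_pair hx hy hf hf'
    refine Submodule.add_mem_sup ⟨a, ha, ?_⟩ ⟨b, hb, ?_⟩ <;> simp [mul_comm]
  have h1 := Submodule.finrank_mono hle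
  have h2 := Submodule.finrank_add_le_finrank_add_finrank
    (V.map (LinearMap.mulLeft ℂ x)) (V.map (LinearMap.mulLeft ℂ y))
  have h3 := Submodule.finrank_map_le (LinearMap.mulLeft ℂ x) V
  have h4 := Submodule.finrank_map_le (LinearMap.mulLeft ℂ y) V
  rw [finrank_homog] at h3 h4
  omega

/-- The lower bound for the dimension of a graded piece of `(x, y)` coming from exactness of the
Koszul complex of a coprime pair. -/
lemma le_finrank_piece {x y : R3} {n e : ℕ} (hx : x.IsHomogeneous n) (hy : y.IsHomogeneous n)
    (hxy : IsRelPrime x y) (hx0 : x ≠ 0) (hy0 : y ≠ 0) :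
    2 * (e + n + 2).choose 2 ≤
      Module.finrank ℂ (idealPiece (Ideal.span {x, y}) (e + n + n)) + (e + 2).choose 2 := by
  set V := homogeneousSubmodule (Fin 3) ℂ (e + n)
  have hle : V.map (LinearMap.mulLeft ℂ x) ⊔ V.map (LinearMap.mulLeft ℂ y) ≤
      idealPiece (Ideal.span {x, y}) (e + n + n) := by
    refine sup_le ?_ ?_
    · rintro _ ⟨a, ha, rfl⟩
      refine ⟨?_, ?_⟩
      · simpa [mul_comm] using IsHomogeneous.mul ha hx
      · exact Ideal.mul_mem_right _ _ (Ideal.subset_span (by simp))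
    · rintro _ ⟨a, ha, rfl⟩
      refine ⟨?_, ?_⟩
      · simpa [mul_comm] using IsHomogeneous.mul ha hy
      · exact Ideal.mul_mem_right _ _ (Ideal.subset_span (by simp))
  have hinf : V.map (LinearMap.mulLeft ℂ x) ⊓ V.map (LinearMap.mulLeft ℂ y) ≤
      (homogeneousSubmodule (Fin 3) ℂ e).map (LinearMap.mulLeft ℂ (x * y)) := by
    rintro _ ⟨⟨a, ha, rfl⟩, ⟨b, hb, hab⟩⟩
    simp only [LinearMap.mulLeft_apply] at hab
    obtain ⟨c, rfl⟩ : y ∣ a := hxy.symm.dvd_of_dvd_mul_left ⟨b, hab.symm⟩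
    refine ⟨homogeneousComponent e c, homogeneousComponent_isHomogeneous _ _, ?_⟩
    have : homogeneousComponent e c * y = c * y := by
      rw [← hcomp_mul hy, homogeneousComponent_eq_self]
      rw [mul_comm]; exact ha
    simp only [LinearMap.mulLeft_apply]
    linear_combination x * this
  have h1 := Submodule.finrank_mono hle
  have h2 := Submodule.finrank_sup_add_finrank_inf_eq
    (V.map (LinearMap.mulLeft ℂ x)) (V.map (LinearMap.mulLeft ℂ y))
  have h3 := Submodule.finrank_mono hinf
  rw [finrank_map_mul (mul_ne_zero hx0 hy0), finrank_homog] at h3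
  rw [finrank_map_mul hx0, finrank_map_mul hy0, finrank_homog] at h2
  omega

/-- The bounds of `finrank_piece_le` in degree `d + n` and of `le_finrank_piece` in degree `e + 2n`
both say that the Hilbert function of `R/(x, y)` is `n ^ 2`. The condition on `d` enters here. -/
lemma choose_identity {n d e : ℕ} (hdn : d + 1 = n ∨ d + 2 = n) :
    (e + n + n + 2).choose 2 + (e + 2).choose 2 + 2 * (d + 2).choose 2 =
      2 * (e + n + 2).choose 2 + (d + n + 2).choose 2 := by
  have h : ∀ m : ℕ, (((m + 2).choose 2 : ℕ) : ℚ) = (m + 2) * (m + 1) / 2 := by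
    intro m
    rw [Nat.cast_choose_two]; push_cast; ring
  have : (((e + n + n + 2).choose 2 + (e + 2).choose 2 + 2 * (d + 2).choose 2 : ℕ) : ℚ) =
      ((2 * (e + n + 2).choose 2 + (d + n + 2).choose 2 : ℕ) : ℚ) := by
    push_cast [h]
    rcases hdn with rfl | rfl <;> push_cast <;> ring
  exact_mod_cast this

/-- If the Hilbert function of `R/I` takes the same value in degrees `d + n` and `d + n + jn`, then
multiplication by `z ^ j` from `(I/Q)_{d+n}` to `(I/Q)_{d+n+jn}`, `Q = (x, y)`, is surjective as
soon as it is injective. -/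
lemma exists_lift {x y z : R3} {n d j : ℕ} {I : Ideal R3} (hdn : d + 1 = n ∨ d + 2 = n)
    (hx : x.IsHomogeneous n) (hy : y.IsHomogeneous n) (hz : z.IsHomogeneous n)
    (hxy : IsRelPrime x y) (hx0 : x ≠ 0) (hy0 : y ≠ 0) (hz0 : z ≠ 0) (hj : 1 ≤ j)
    (hQ : Ideal.span {x, y} ≤ I)
    (hinj : ∀ a ∈ I, z ^ j * a ∈ Ideal.span {x, y} → a ∈ Ideal.span {x, y})
    (hdim : quotDim I (d + n) = quotDim I (d + n + n * j))
    {f : R3} (hf : f ∈ I) (hfh : f.IsHomogeneous (d + n + n * j)) :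
    ∃ g ∈ I, g.IsHomogeneous (d + n) ∧ f - z ^ j * g ∈ Ideal.span {x, y} := by
  set Q := Ideal.span {x, y} with hQdef
  set A := (idealPiece I (d + n)).map (LinearMap.mulLeft ℂ (z ^ j)) with hA
  set B := idealPiece Q (d + n + n * j) with hB
  have hAB : A ⊔ B ≤ idealPiece I (d + n + n * j) := by
    refine sup_le ?_ fun q hq => ⟨hq.1, hQ hq.2⟩
    rintro _ ⟨a, ha, rfl⟩
    exact ⟨by simpa [mul_comm] using IsHomogeneous.mul ha.1 (hz.pow j),
      Ideal.mul_mem_left _ _ ha.2⟩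
  have hinf : A ⊓ B ≤ (idealPiece Q (d + n)).map (LinearMap.mulLeft ℂ (z ^ j)) := by
    rintro _ ⟨⟨a, ha, rfl⟩, hb⟩
    exact ⟨a, ⟨ha.1, hinj a ha.2 hb.2⟩, rfl⟩
  obtain ⟨e, he⟩ : ∃ e, d + n + n * j = e + n + n := by
    obtain ⟨i, rfl⟩ := Nat.exists_eq_add_of_le hj
    exact ⟨d + n * i, by ring⟩
  have h1 := Submodule.finrank_sup_add_finrank_inf_eq A B
  have h2 := Submodule.finrank_mono hinf
  have h3 : Module.finrank ℂ A = _ := finrank_map_mul (pow_ne_zero j hz0) _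
  rw [finrank_map_mul (pow_ne_zero j hz0)] at h2
  have h4 := finrank_piece_le (e := d) hx hy
  have h5 := le_finrank_piece (e := e) hx hy hxy hx0 hy0
  rw [← he, ← hQdef, ← hB] at h5
  rw [← hQdef] at h4
  have h6 := quotDim_add_finrank I (d + n)
  have h7 := quotDim_add_finrank I (d + n + n * j)
  have h8 := choose_identity (e := e) hdn
  rw [← he] at h8
  have heq := Submodule.eq_of_le_of_finrank_le hAB (by omega)
  have hmem : f ∈ A ⊔ B := by rw [heq]; exact ⟨hfh, hf⟩
  obtain ⟨_, ⟨g, hg, rfl⟩, q, hq, rfl⟩ := Submodule.mem_sup.1 hmem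
  exact ⟨g, hg.2, hg.1, by simpa using hq.2⟩

/-! ### The theorem for a coprime pair generating locally -/

lemma X_mem_irrelevant (i : Fin 3) : (X i : R3) ∈ Ideal.span ({X 0, X 1, X 2} : Set R3) := by
  apply Ideal.subset_span
  fin_cases i <;> simp

lemma mem_irrelevant_of_homog {z : R3} {n : ℕ} (hz : z.IsHomogeneous n) (hn : 1 ≤ n) :
    z ∈ Ideal.span ({X 0, X 1, X 2} : Set R3) := by
  have key : ({X 0, X 1, X 2} : Set R3) = X '' (Set.univ : Set (Fin 3)) := by
    ext p
    simp [Fin.exists_fin_succ, eq_comm]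
  rw [key, mem_ideal_span_X_image]
  intro m hm
  by_contra! hcon
  have h0 : m = 0 := by ext i; exact hcon i trivial
  have := hz (mem_support_iff.1 hm)
  subst h0
  simp at this
  omega

/-- The theorem when `x, y` are coprime and, at every common zero of `x, y, z` other than the
origin, `x, y` generate the ideal `(x, y, z)` locally; the latter is expressed by an ideal `H`
contained in `(x, y) : z` such that `(x, y, z) + H` contains a power of the irrelevant ideal. -/
theorem core {n d : ℕ} {x y z w : R3} (hdn : d + 1 = n ∨ d + 2 = n)
    (hx : x.IsHomogeneous n) (hy : y.IsHomogeneous n) (hz : z.IsHomogeneous n)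
    (hxy : IsRelPrime x y) (hx0 : x ≠ 0) (hy0 : y ≠ 0) (hz0 : z ≠ 0)
    {H : Ideal R3} (hH : ∀ h ∈ H, h * z ∈ Ideal.span {x, y}) {M : ℕ}
    (hM : (Ideal.span {X 0, X 1, X 2} : Ideal R3) ^ M ≤ Ideal.span {x, y, z} ⊔ H)
    (hw : w ∈ satSet (Ideal.span {x, y, z})) {D N : ℕ}
    (hD : ∀ k, N ≤ k → quotDim (Ideal.span {x, y, z, w}) k = D)
    (hBP3 : quotDim (Ideal.span {x, y, z, w}) (d + n) = D)
    {f : R3} (hfh : f.IsHomogeneous (d + 2 * n))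
    (hf : f ∈ satSet (Ideal.span {x, y, z, w} ^ 2)) :
    f ∈ Ideal.span {x, y, z, w} ^ 2 := by
  set I := Ideal.span {x, y, z, w} with hI
  set J := Ideal.span {x, y, z} with hJ
  set Q := Ideal.span {x, y} with hQ
  set m : Ideal R3 := Ideal.span {X 0, X 1, X 2} with hm
  have hn : 1 ≤ n := by omega
  have xI : x ∈ I := Ideal.subset_span (by simp)
  have yI : y ∈ I := Ideal.subset_span (by simp)
  have zI : z ∈ I := Ideal.subset_span (by simp)
  have xQ : x ∈ Q := Ideal.subset_span (by simp)
  have yQ : y ∈ Q := Ideal.subset_span (by simp)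
  have hQJ : Q ≤ J := Ideal.span_mono (by intro; simp; tauto)
  have hJI : J ≤ I := Ideal.span_mono (by intro; simp; tauto)
  have hHJ : ∀ h ∈ H, ∀ j ∈ J, h * j ∈ Q := by
    intro h hh j hj
    obtain ⟨a, b, c, rfl⟩ := Submodule.mem_span_triple.1 hj
    have e : h * (a • x + b • y + c • z) = (h * a) * x + (h * b) * y + c * (h * z) := by
      simp only [smul_eq_mul]; ring
    rw [e]
    exact add_mem (add_mem (Q.mul_mem_left _ xQ) (Q.mul_mem_left _ yQ))
      (Q.mul_mem_left _ (hH h hh))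
  have hzpow : ∀ {k j : ℕ}, k ≤ j → z ^ j ∈ m ^ k := fun {k j} hkj =>
    Ideal.pow_le_pow_right hkj (Ideal.pow_mem_pow (mem_irrelevant_of_homog hz hn) j)
  -- `z` is a nonzerodivisor on `sat(J) / Q`
  have inj1 : ∀ a ∈ satSet J, z * a ∈ Q → a ∈ Q := by
    rintro a ⟨k, hk⟩ hza
    have hJa : ∀ j ∈ J, j * a ∈ Q := by
      intro j hj
      obtain ⟨p, q, r, rfl⟩ := Submodule.mem_span_triple.1 hj
      have e : (p • x + q • y + r • z) * a = (p * a) * x + (q * a) * y + r * (z * a) := by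
        simp only [smul_eq_mul]; ring
      rw [e]
      exact add_mem (add_mem (Q.mul_mem_left _ xQ) (Q.mul_mem_left _ yQ)) (Q.mul_mem_left _ hza)
    have hall : ∀ g ∈ m ^ (k + M), g * a ∈ Q := by
      intro g hg
      rw [pow_add] at hg
      refine Submodule.mul_induction_on hg ?_ ?_
      · intro g1 h1 g2 h2
        obtain ⟨j, hj, h, hh, rfl⟩ := Submodule.mem_sup.1 (hM h2)
        have e : g1 * (j + h) * a = g1 * (j * a) + h * (g1 * a) := by ring
        rw [e]
        exact add_mem (Q.mul_mem_left _ (hJa j hj)) (hHJ h hh _ (hk g1 h1))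
      · intro p q hp hq
        rw [add_mul]; exact add_mem hp hq
    exact mem_of_X_pow_mul_mem hxy hy0 fun i =>
      hall _ (Ideal.pow_mem_pow (X_mem_irrelevant i) _)
  have injj : ∀ j, ∀ a ∈ satSet J, z ^ j * a ∈ Q → a ∈ Q := by
    intro j
    induction j with
    | zero => intro a _ h; simpa using h
    | succ j ih =>
      intro a ha h
      refine ih a ha (inj1 _ ?_ ?_)
      · obtain ⟨k, hk⟩ := ha
        exact ⟨k, fun g hg => by
          rw [mul_left_comm]; exact J.mul_mem_left _ (hk g hg)⟩
      · rw [← mul_assoc, ← pow_succ']; exact h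
  obtain ⟨k0, hk0⟩ : ∃ k, ∀ g ∈ m ^ k, ∀ i ∈ I, g * i ∈ J := by
    obtain ⟨k, hk⟩ := hw
    refine ⟨k, fun g hg i hi => ?_⟩
    have hle : I ≤ J ⊔ Ideal.span {w} := by
      rw [hI, hJ, ← Ideal.span_union]
      exact Ideal.span_mono (by intro; simp; tauto)
    obtain ⟨j, hj, b, hb, rfl⟩ := Submodule.mem_sup.1 (hle hi)
    obtain ⟨c, rfl⟩ := Ideal.mem_span_singleton'.1 hb
    rw [mul_add, mul_left_comm]
    exact add_mem (J.mul_mem_left _ hj) (J.mul_mem_left _ (hk g hg))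
  have hIsat : ∀ a ∈ I, a ∈ satSet J := fun a ha => ⟨k0, fun g hg => hk0 g hg a ha⟩
  have lift : ∀ j, 1 ≤ j → N ≤ j → ∀ p ∈ I, p.IsHomogeneous (d + n + n * j) →
      ∃ g ∈ I, g.IsHomogeneous (d + n) ∧ p - z ^ j * g ∈ Q := by
    intro j hj hNj p hp hph
    refine exists_lift hdn hx hy hz hxy hx0 hy0 hz0 hj (hQJ.trans hJI)
      (fun a ha => injj j a (hIsat a ha)) ?_ hp hph
    rw [hBP3, hD]
    nlinarith
  -- the graded pieces of `I` and `sat(J)` in degree `d + n` agree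
  have hsat : ∀ a ∈ satSet J, a.IsHomogeneous (d + n) → a ∈ I := by
    rintro a ⟨k, hk⟩ hah
    have hza : z ^ (k + N + 1) * a ∈ I := hJI (hk _ (hzpow (by omega)))
    obtain ⟨g, hg, hgh, hgQ⟩ := lift (k + N + 1) (by omega) (by omega) _ hza
      (by rw [mul_comm]; exact hah.mul (hz.pow _))
    rw [← mul_sub] at hgQ
    have : a - g ∈ Q := by
      refine injj _ _ ?_ hgQ
      refine ⟨k + k0, fun q hq => ?_⟩
      rw [mul_sub]
      exact sub_mem (hk _ (Ideal.pow_le_pow_right (by omega) hq))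
        (hk0 _ (Ideal.pow_le_pow_right (by omega) hq) _ hg)
    have := add_mem (hJI (hQJ this)) hg
    simpa using this
  -- a coefficient of an element of `sat(I ^ 2)` with respect to `x, y` lies in `sat(J)`
  have hcoef : ∀ x' y' a b : R3, Ideal.span {x', y'} = Q → IsRelPrime x' y' → ∀ K,
      (∀ g ∈ m ^ K, g * (a * x' + b * y') ∈ I ^ 2) → a ∈ satSet J := by
    intro x' y' a b hQ' hrp K hK
    have hKJ : ∀ g1 ∈ m ^ K, ∀ g2 ∈ m ^ k0, ∀ g3 ∈ m ^ k0, ∀ h2 ∈ H, ∀ h3 ∈ H,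
        (g1 * g2 * g3 * h2 * h3) * (a * x' + b * y') ∈ Q * Q := by
      intro g1 hg1 g2 hg2 g3 hg3 h2 hh2 h3 hh3
      have e : (g1 * g2 * g3 * h2 * h3) * (a * x' + b * y') =
        (h2 * g2) * (h3 * g3) * (g1 * (a * x' + b * y')) := by ring
      rw [e]
      have hh := hK g1 hg1
      rw [pow_two] at hh
      refine Submodule.mul_induction_on hh ?_ ?_
      · intro p hp q hq
        have e : h2 * g2 * (h3 * g3) * (p * q) = (h2 * (g2 * p)) * (h3 * (g3 * q)) := by ring
        rw [e]
        exact Ideal.mul_mem_mul (hHJ _ hh2 _ (hk0 _ hg2 _ hp)) (hHJ _ hh3 _ (hk0 _ hg3 _ hq))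
      · intro p q hp hq
        rw [mul_add]; exact add_mem hp hq
    have hKJ' : ∀ g1 ∈ m ^ K, ∀ g2 ∈ m ^ k0, ∀ g3 ∈ m ^ k0, ∀ h2 ∈ H, ∀ h3 ∈ H,
        (g1 * g2 * g3 * h2 * h3) * a ∈ Q := by
      intro g1 hg1 g2 hg2 g3 hg3 h2 hh2 h3 hh3
      have := hKJ g1 hg1 g2 hg2 g3 hg3 h2 hh2 h3 hh3
      rw [← hQ'] at this ⊢
      refine mem_of_mem_sq (d := (g1 * g2 * g3 * h2 * h3) * b) hrp ?_
      convert this using 1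
      ring
    have step : ∀ g1 ∈ m ^ K, ∀ g2 ∈ m ^ k0, ∀ g3 ∈ m ^ k0, ∀ p ∈ m ^ M, ∀ q ∈ m ^ M,
        (g1 * g2 * g3 * p * q) * a ∈ J := by
      intro g1 hg1 g2 hg2 g3 hg3 p hp q hq
      obtain ⟨j2, hj2, h2, hh2, rfl⟩ := Submodule.mem_sup.1 (hM hp)
      obtain ⟨j3, hj3, h3, hh3, rfl⟩ := Submodule.mem_sup.1 (hM hq)
      have e : (g1 * g2 * g3 * (j2 + h2) * (j3 + h3)) * a =
          (g1 * g2 * g3 * (j3 + h3) * a) * j2 + (g1 * g2 * g3 * h2 * a) * j3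
          + (g1 * g2 * g3 * h2 * h3) * a := by ring
      rw [e]
      exact add_mem (add_mem (J.mul_mem_left _ hj2) (J.mul_mem_left _ hj3))
        (hQJ (hKJ' g1 hg1 g2 hg2 g3 hg3 h2 hh2 h3 hh3))
    refine ⟨K + k0 + k0 + M + M, ?_⟩
    have hle : m ^ (K + k0 + k0 + M + M) ≤
        Submodule.comap (LinearMap.mulRight R3 a) J := by
      simp only [pow_add]
      refine Ideal.mul_le.2 fun r hr q hq => ?_
      have hle4 : m ^ K * m ^ k0 * m ^ k0 * m ^ M ≤
          Submodule.comap (LinearMap.mulRight R3 (q * a)) J := by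
        refine Ideal.mul_le.2 fun r hr p hp => ?_
        have hle3 : m ^ K * m ^ k0 * m ^ k0 ≤
            Submodule.comap (LinearMap.mulRight R3 (p * (q * a))) J := by
          refine Ideal.mul_le.2 fun r hr g3 hg3 => ?_
          have hle2 : m ^ K * m ^ k0 ≤
              Submodule.comap (LinearMap.mulRight R3 (g3 * (p * (q * a)))) J := by
            refine Ideal.mul_le.2 fun g1 hg1 g2 hg2 => ?_
            have := step g1 hg1 g2 hg2 g3 hg3 p hp q hq
            simpa [mul_assoc] using this
          simpa [mul_assoc] using hle2 hr
        simpa [mul_assoc] using hle3 hr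
      simpa [mul_assoc] using hle4 hr
    exact fun g hg => hle hg
  obtain ⟨K, hK⟩ := hf
  have hI2 : I ^ 2 ≤ I := Ideal.pow_le_self two_ne_zero
  -- divide `f` by `z` modulo `Q`
  obtain ⟨g, hg, hgh, hgQ⟩ := lift (K + N + 2) (by omega) (by omega) (z ^ (K + N + 1) * f)
    (hI2 (hK _ (hzpow (by omega)))) (by
      have := hfh.mul (hz.pow (K + N + 1))
      rw [mul_comm]
      convert this using 1
      ring)
  have hfg : f - z * g ∈ Q := by
    refine injj (K + N + 1) _ ?_ ?_
    · refine ⟨K + k0, fun q hq => ?_⟩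
      rw [pow_add] at hq
      refine Submodule.mul_induction_on hq ?_ ?_
      · intro p hp r hr
        rw [mul_assoc, mul_left_comm, mul_sub, mul_sub]
        refine sub_mem ?_ ?_
        · exact hk0 r hr _ (hI2 (hK p hp))
        · have e : p * (r * (z * g)) = (p * z) * (r * g) := by ring
          rw [mul_left_comm, e]
          exact J.mul_mem_left _ (hk0 r hr g hg)
      · intro p r hp hr
        rw [add_mul]; exact add_mem hp hr
    · convert hgQ using 1
      ring
  have hzg : (z * g).IsHomogeneous (d + n + n) := by
    rw [mul_comm]; exact hgh.mul hz
  have hfh' : f.IsHomogeneous (d + n + n) := by convert hfh using 1; ring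
  obtain ⟨a, b, ha, hb, hab⟩ := exists_homog_pair hx hy (hfh'.sub hzg) hfg
  have hzgI : z * g ∈ I ^ 2 := by rw [pow_two]; exact Ideal.mul_mem_mul zI hg
  have hKab : ∀ q ∈ m ^ K, q * (a * x + b * y) ∈ I ^ 2 := by
    intro q hq
    rw [hab, mul_sub]
    exact sub_mem (hK q hq) (Ideal.mul_mem_left _ _ hzgI)
  have haI : a ∈ I := hsat a (hcoef x y a b rfl hxy K hKab) ha
  have hbI : b ∈ I := by
    refine hsat b (hcoef y x b a (by rw [hQ, Set.pair_comm]) hxy.symm K ?_) hb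
    intro q hq
    rw [add_comm]; exact hKab q hq
  have : f = a * x + b * y + z * g := by rw [hab]; ring
  rw [this]
  refine add_mem ?_ hzgI
  rw [pow_two]
  exact add_mem (Ideal.mul_mem_mul haI xI) (Ideal.mul_mem_mul hbI yI)

/-! ### Lines through the origin -/

/-- The prime ideal of the line through the origin spanned by `v`: the kernel of restriction of
polynomials to the line. -/
noncomputable def lineIdeal (v : Fin 3 → ℂ) : Ideal R3 :=
  RingHom.ker (aeval (fun i => Polynomial.C (v i) * Polynomial.X) : R3 →ₐ[ℂ] Polynomial ℂ)

instance lineIdeal_isPrime (v : Fin 3 → ℂ) : (lineIdeal v).IsPrime := RingHom.ker_isPrime _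

lemma mem_lineIdeal {v : Fin 3 → ℂ} {g : R3} :
    g ∈ lineIdeal v ↔ ∀ t : ℂ, eval (t • v) g = 0 := by
  have key : ∀ t : ℂ, Polynomial.eval t
      (aeval (fun i => Polynomial.C (v i) * Polynomial.X) g : Polynomial ℂ) = eval (t • v) g := by
    intro t
    rw [← Polynomial.coe_aeval_eq_eval, ← AlgHom.comp_apply, comp_aeval,
      MvPolynomial.aeval_eq_eval]
    congr 2
    ext i
    simp only [map_mul, Polynomial.aeval_C, Polynomial.aeval_X, Pi.smul_apply, smul_eq_mul]
    exact mul_comm _ _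
  rw [lineIdeal, RingHom.mem_ker]
  constructor
  · intro h t
    rw [← key]
    exact (congrArg (Polynomial.eval t) h).trans Polynomial.eval_zero
  · intro h
    apply Polynomial.funext
    intro t
    rw [Polynomial.eval_zero, ← h t]
    exact key t

lemma eval_smul_homog {g : R3} {k : ℕ} (hg : g.IsHomogeneous k) (t : ℂ) (v : Fin 3 → ℂ) :
    eval (t • v) g = t ^ k * eval v g := by
  rw [eval_eq, eval_eq, Finset.mul_sum]
  refine Finset.sum_congr rfl fun m hm => ?_
  have : ∑ i ∈ m.support, m i = k := by
    have := hg (mem_support_iff.1 hm)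
    rw [← this, Finsupp.weight_apply]
    simp [Finsupp.sum]
  simp only [Pi.smul_apply, smul_eq_mul, mul_pow, Finset.prod_mul_distrib,
    Finset.prod_pow_eq_pow_sum, this]
  ring

lemma mem_lineIdeal_homog {v : Fin 3 → ℂ} {g : R3} {k : ℕ} (hg : g.IsHomogeneous k)
    (h : eval v g = 0) : g ∈ lineIdeal v :=
  mem_lineIdeal.2 fun t => by rw [eval_smul_homog hg, h, mul_zero]

/-- If the zero set of `I` is covered by finitely many lines through the origin, then every prime
containing `I` contains the ideal of one of these lines. -/
lemma exists_lineIdeal_le {I P : Ideal R3} [hP : P.IsPrime] (hIP : I ≤ P)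
    {F : Finset (Fin 3 → ℂ)}
    (hF : ∀ v : Fin 3 → ℂ, (∀ p ∈ I, eval v p = 0) → ∃ u ∈ F, ∃ c : ℂ, v = c • u) :
    ∃ u ∈ F, lineIdeal u ≤ P := by
  refine (Ideal.IsPrime.inf_le' (s := F) (f := lineIdeal) hP).1 ?_
  have h1 : F.inf lineIdeal ≤ I.radical := by
    rw [← vanishingIdeal_zeroLocus_eq_radical (K := ℂ)]
    intro g hg
    rw [mem_vanishingIdeal_iff]
    intro v hv
    obtain ⟨u, hu, c, rfl⟩ := hF v (by
      intro p hp
      simpa [aeval_eq_eval] using hv p hp)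
    have := mem_lineIdeal.1 ((Submodule.mem_finsetInf.1 hg) u hu) c
    simpa [aeval_eq_eval] using this
  exact h1.trans (hP.radical_le_iff.2 hIP)

lemma smul_eq_of_lineIdeal_le {u v : Fin 3 → ℂ} (hu : u ≠ 0) (h : lineIdeal u ≤ lineIdeal v) :
    ∃ c : ℂ, v = c • u := by
  obtain ⟨i, hi⟩ := Function.ne_iff.1 hu
  refine ⟨v i / u i, ?_⟩
  ext j
  have h1 : (C (u i) * X j - C (u j) * X i : R3) ∈ lineIdeal u :=
    mem_lineIdeal.2 fun t => by simp; ring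
  have h2 := mem_lineIdeal.1 (h h1) 1
  simp at h2 hi
  simp
  field_simp
  linear_combination h2

/-- If the zero set of `I` is covered by finitely many lines through the origin, then the ideal of
any line inside it is a minimal prime of `I`. -/
lemma lineIdeal_mem_minimalPrimes {I : Ideal R3} {v : Fin 3 → ℂ} (hv : v ≠ 0)
    (hI : I ≤ lineIdeal v) {F : Finset (Fin 3 → ℂ)} (hF0 : ∀ u ∈ F, u ≠ 0)
    (hF : ∀ v : Fin 3 → ℂ, (∀ p ∈ I, eval v p = 0) → ∃ u ∈ F, ∃ c : ℂ, v = c • u) :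
    lineIdeal v ∈ I.minimalPrimes := by
  obtain ⟨P, hP, hPv⟩ := Ideal.exists_minimalPrimes_le hI
  have := hP.1.1
  obtain ⟨u, hu, huP⟩ := exists_lineIdeal_le hP.1.2 hF
  obtain ⟨c, rfl⟩ := smul_eq_of_lineIdeal_le (hF0 u hu) (huP.trans hPv)
  have hc : c ≠ 0 := by rintro rfl; simp at hv
  have : lineIdeal (c • u) ≤ P := by
    refine le_trans (fun g hg => mem_lineIdeal.2 fun t => ?_) huP
    have := mem_lineIdeal.1 hg (t / c)
    rwa [smul_smul, div_mul_cancel₀ _ hc] at this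
  rwa [le_antisymm this hPv]

/-- Polynomials whose common zeros lie on finitely many lines through the origin have no common
prime factor. -/
lemma not_prime_dvd {x y z p : R3} {F : Finset (Fin 3 → ℂ)} (hF0 : ∀ u ∈ F, u ≠ 0)
    (hF : ∀ v : Fin 3 → ℂ, eval v x = 0 → eval v y = 0 → eval v z = 0 →
      ∃ u ∈ F, ∃ c : ℂ, v = c • u)
    (hp : Prime p) (hx : p ∣ x) (hy : p ∣ y) (hz : p ∣ z) : False := by
  have hP : (Ideal.span {p} : Ideal R3).IsPrime := (Ideal.span_singleton_prime hp.ne_zero).2 hp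
  obtain ⟨u, hu, hle⟩ := exists_lineIdeal_le (le_refl (Ideal.span {p})) (F := F) (by
    intro v hv
    have h0 := hv p (Ideal.mem_span_singleton_self p)
    have : ∀ q, p ∣ q → eval v q = 0 := by
      rintro _ ⟨r, rfl⟩
      simp [h0]
    exact hF v (this x hx) (this y hy) (this z hz))
  obtain ⟨i, hi⟩ := Function.ne_iff.1 (hF0 u hu)
  have hdvd : ∀ j, p ∣ (C (u i) * X j - C (u j) * X i : R3) := fun j =>
    Ideal.mem_span_singleton.1 (hle (mem_lineIdeal.2 fun t => by simp; ring))
  -- two independent linear forms vanishing on the line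
  obtain ⟨j, k, hij, hik, hjk⟩ : ∃ j k : Fin 3, i ≠ j ∧ i ≠ k ∧ j ≠ k := by
    clear hi hdvd
    revert i; decide
  have hne : ∀ j, i ≠ j → (C (u i) * X j - C (u j) * X i : R3) ≠ 0 := by
    intro j hij h0
    have := congrArg (coeff (Finsupp.single j 1)) h0
    simp [coeff_C_mul, coeff_X, Finsupp.single_left_inj, hij] at this
    exact hi this
  have hdeg : ∀ j, (C (u i) * X j - C (u j) * X i : R3).totalDegree ≤ 1 := fun j =>
    (((isHomogeneous_C_mul_X _ _).sub (isHomogeneous_C_mul_X _ _))).totalDegree_le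
  have hpdeg : p.totalDegree ≠ 0 := by
    intro h0
    rw [totalDegree_eq_zero_iff_eq_C] at h0
    apply hp.not_isUnit
    rw [h0]
    refine IsUnit.map C (isUnit_iff_ne_zero.2 fun h => hp.ne_zero ?_)
    rw [h0, h, C_0]
  have hconst : ∀ j, i ≠ j → ∃ c : ℂ, (C (u i) * X j - C (u j) * X i : R3) = p * C c := by
    intro j hij
    obtain ⟨q, hq⟩ := hdvd j
    have hq0 : q ≠ 0 := by rintro rfl; exact hne j hij (by rw [hq, mul_zero])
    have h1 := hdeg j
    rw [hq, totalDegree_mul_of_isDomain hp.ne_zero hq0] at h1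
    exact ⟨coeff 0 q, by rw [hq, ← totalDegree_eq_zero_iff_eq_C.1 (by omega)]⟩
  obtain ⟨c, hc⟩ := hconst j hij
  obtain ⟨e, he⟩ := hconst k hik
  have hrel : C e * (C (u i) * X j - C (u j) * X i : R3) =
      C c * (C (u i) * X k - C (u k) * X i) := by rw [hc, he]; ring
  have hrel' := congrArg (coeff (Finsupp.single j 1)) hrel
  simp [coeff_C_mul, coeff_X, Finsupp.single_left_inj, hij, hjk.symm] at hrel'
  rcases hrel' with h | h
  · exact hne k hik (by rw [he, h]; simp)
  · exact hi h

/-! ### Syzygies from the local complete intersection condition -/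

/-- If three polynomials generate, locally at a prime `P`, an ideal with two generators, then they
have a syzygy with some coefficient outside `P`: writing the three generators through the two and
back gives a `3 × 3` matrix of rank at most two fixing the vector of generators, and this matrix
cannot be the identity modulo the maximal ideal. -/
lemma exists_syzygy {P : Ideal R3} [P.IsPrime] {x y z : R3} {a b : Localization.AtPrime P}
    (hab : Ideal.map (algebraMap R3 (Localization.AtPrime P)) (Ideal.span {x, y, z}) =
      Ideal.span {a, b}) :
    ∃ A B C : R3, A * x + B * y + C * z = 0 ∧ ¬ (A ∈ P ∧ B ∈ P ∧ C ∈ P) := by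
  by_contra! hcon
  set φ := algebraMap R3 (Localization.AtPrime P)
  have hφ : Function.Injective φ :=
    IsLocalization.injective (Localization.AtPrime P) P.primeCompl_le_nonZeroDivisors
  have hloc : ∀ α β γ : Localization.AtPrime P, α * φ x + β * φ y + γ * φ z = 0 →
      α ∈ IsLocalRing.maximalIdeal (Localization.AtPrime P) ∧
      β ∈ IsLocalRing.maximalIdeal (Localization.AtPrime P) ∧
      γ ∈ IsLocalRing.maximalIdeal (Localization.AtPrime P) := by
    intro α β γ h
    obtain ⟨A, s1, rfl⟩ := IsLocalization.exists_mk'_eq P.primeCompl α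
    obtain ⟨B, s2, rfl⟩ := IsLocalization.exists_mk'_eq P.primeCompl β
    obtain ⟨C, s3, rfl⟩ := IsLocalization.exists_mk'_eq P.primeCompl γ
    have e1 := IsLocalization.mk'_spec (Localization.AtPrime P) A s1
    have e2 := IsLocalization.mk'_spec (Localization.AtPrime P) B s2
    have e3 := IsLocalization.mk'_spec (Localization.AtPrime P) C s3
    have hs : A * s2 * s3 * x + B * s1 * s3 * y + C * s1 * s2 * z = 0 := by
      apply hφ
      simp only [map_add, map_mul, map_zero]
      change _ * φ s1 = φ A at e1
      change _ * φ s2 = φ B at e2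
      change _ * φ s3 = φ C at e3
      rw [← e1, ← e2, ← e3]
      linear_combination (φ s1 * φ s2 * φ s3) * h
    have hP : P.IsPrime := inferInstance
    obtain ⟨h1, h2, h3⟩ := hcon _ _ _ hs
    have hs1 : (s1 : R3) ∉ P := s1.2
    have hs2 : (s2 : R3) ∉ P := s2.2
    have hs3 : (s3 : R3) ∉ P := s3.2
    simp only [hP.mul_mem_iff_mem_or_mem, hs1, hs2, hs3, or_false] at h1 h2 h3
    simp only [IsLocalization.AtPrime.mk'_mem_maximal_iff (Localization.AtPrime P) P]
    exact ⟨h1, h2, h3⟩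
  have himg : Ideal.map φ (Ideal.span {x, y, z}) = Ideal.span {φ x, φ y, φ z} := by
    rw [Ideal.map_span, Set.image_insert_eq, Set.image_pair]
  rw [himg] at hab
  have ha : a ∈ Ideal.span {φ x, φ y, φ z} := hab ▸ Ideal.subset_span (by simp)
  have hb : b ∈ Ideal.span {φ x, φ y, φ z} := hab ▸ Ideal.subset_span (by simp)
  have hx : φ x ∈ Ideal.span {a, b} := hab ▸ Ideal.subset_span (by simp)
  have hy : φ y ∈ Ideal.span {a, b} := hab ▸ Ideal.subset_span (by simp)
  have hz : φ z ∈ Ideal.span {a, b} := hab ▸ Ideal.subset_span (by simp)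
  obtain ⟨n1, n2, n3, ha⟩ := Submodule.mem_span_triple.1 ha
  obtain ⟨m1, m2, m3, hb⟩ := Submodule.mem_span_triple.1 hb
  obtain ⟨t1, u1, hx⟩ := Ideal.mem_span_pair.1 hx
  obtain ⟨t2, u2, hy⟩ := Ideal.mem_span_pair.1 hy
  obtain ⟨t3, u3, hz⟩ := Ideal.mem_span_pair.1 hz
  simp only [smul_eq_mul] at ha hb
  obtain ⟨h11, h12, h13⟩ := hloc (1 - (t1 * n1 + u1 * m1)) (0 - (t1 * n2 + u1 * m2))
    (0 - (t1 * n3 + u1 * m3)) (by linear_combination -hx - t1 * ha - u1 * hb)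
  obtain ⟨h21, h22, h23⟩ := hloc (0 - (t2 * n1 + u2 * m1)) (1 - (t2 * n2 + u2 * m2))
    (0 - (t2 * n3 + u2 * m3)) (by linear_combination -hy - t2 * ha - u2 * hb)
  obtain ⟨h31, h32, h33⟩ := hloc (0 - (t3 * n1 + u3 * m1)) (0 - (t3 * n2 + u3 * m2))
    (1 - (t3 * n3 + u3 * m3)) (by linear_combination -hz - t3 * ha - u3 * hb)
  set r := IsLocalRing.residue (Localization.AtPrime P)
  have res : ∀ p q : Localization.AtPrime P,
      p - q ∈ IsLocalRing.maximalIdeal (Localization.AtPrime P) → r q = r p := by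
    intro p q h
    have := (IsLocalRing.residue_eq_zero_iff _).2 h
    rw [map_sub, sub_eq_zero] at this
    exact this.symm
  have hdet : r (t1 * n1 + u1 * m1) * (r (t2 * n2 + u2 * m2) * r (t3 * n3 + u3 * m3)
        - r (t2 * n3 + u2 * m3) * r (t3 * n2 + u3 * m2))
      - r (t1 * n2 + u1 * m2) * (r (t2 * n1 + u2 * m1) * r (t3 * n3 + u3 * m3)
        - r (t2 * n3 + u2 * m3) * r (t3 * n1 + u3 * m1))
      + r (t1 * n3 + u1 * m3) * (r (t2 * n1 + u2 * m1) * r (t3 * n2 + u3 * m2)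
        - r (t2 * n2 + u2 * m2) * r (t3 * n1 + u3 * m1)) = 0 := by
    simp only [map_add, map_mul]; ring
  rw [res _ _ h11, res _ _ h12, res _ _ h13, res _ _ h21, res _ _ h22, res _ _ h23,
    res _ _ h31, res _ _ h32, res _ _ h33] at hdet
  simp at hdet

/-- If the homogeneous `x, y, z` generate, locally along the line through `v`, an ideal with two
generators, then they have a homogeneous syzygy which does not vanish at `v`. -/
lemma exists_homog_syzygy {n : ℕ} {x y z : R3} (hx : x.IsHomogeneous n) (hy : y.IsHomogeneous n)
    (hz : z.IsHomogeneous n) {v : Fin 3 → ℂ} {a b : Localization.AtPrime (lineIdeal v)}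
    (hab : Ideal.map (algebraMap R3 (Localization.AtPrime (lineIdeal v)))
      (Ideal.span {x, y, z}) = Ideal.span {a, b}) :
    ∃ (k : ℕ) (A B C : R3), A.IsHomogeneous k ∧ B.IsHomogeneous k ∧ C.IsHomogeneous k ∧
      A * x + B * y + C * z = 0 ∧ ¬ (eval v A = 0 ∧ eval v B = 0 ∧ eval v C = 0) := by
  obtain ⟨A, B, C, hsyz, hnot⟩ := exists_syzygy hab
  by_contra! hcon
  have hk : ∀ k, eval v (homogeneousComponent k A) = 0 ∧ eval v (homogeneousComponent k B) = 0 ∧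
      eval v (homogeneousComponent k C) = 0 := fun k =>
    hcon k _ _ _ (homogeneousComponent_isHomogeneous k A) (homogeneousComponent_isHomogeneous k B)
      (homogeneousComponent_isHomogeneous k C) (by
        rw [← hcomp_mul hx, ← hcomp_mul hy, ← hcomp_mul hz, ← map_add, ← map_add, hsyz, map_zero])
  have hmem : ∀ G : R3, (∀ k, eval v (homogeneousComponent k G) = 0) → G ∈ lineIdeal v := by
    intro G hG
    rw [← sum_homogeneousComponent G]
    exact sum_mem fun k _ => mem_lineIdeal_homog (homogeneousComponent_isHomogeneous k G) (hG k)
  exact hnot ⟨hmem A fun k => (hk k).1, hmem B fun k => (hk k).2.1, hmem C fun k => (hk k).2.2⟩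

/-- For all but finitely many `μ`, `y + μ z` is coprime to a given nonzero `x'`. -/
lemma finite_not_relPrime {x' y z : R3} (hx' : x' ≠ 0)
    (h : ∀ p, Prime p → p ∣ x' → p ∣ y → p ∣ z → False) :
    {μ : ℂ | ¬ IsRelPrime x' (y + C μ * z)}.Finite := by
  classical
  have hsub : {μ : ℂ | ¬ IsRelPrime x' (y + C μ * z)} ⊆
      ⋃ p ∈ (UniqueFactorizationMonoid.factors x').toFinset, {μ : ℂ | p ∣ y + C μ * z} := by
    intro μ hμ
    rw [Set.mem_ofPred_eq, UniqueFactorizationMonoid.isRelPrime_iff_no_prime_factors hx'] at hμ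
    push Not at hμ
    obtain ⟨q, hq1, hq2, hq⟩ := hμ
    obtain ⟨p, hp, hqp⟩ :=
      UniqueFactorizationMonoid.exists_mem_factors_of_dvd hx' hq.irreducible hq1
    simp only [Set.mem_iUnion]
    exact ⟨p, by simpa using hp, hqp.symm.dvd.trans hq2⟩
  refine Set.Finite.subset (Set.Finite.biUnion (Finset.finite_toSet _) fun p hp => ?_) hsub
  have hp' : p ∈ UniqueFactorizationMonoid.factors x' := by simpa using hp
  have hpp := UniqueFactorizationMonoid.prime_of_factor p hp'
  apply Set.Subsingleton.finite
  intro μ hμ ν hν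
  by_contra hne
  have hunit : (C (μ - ν)⁻¹ * C (μ - ν) : R3) = 1 := by
    rw [← C_mul, inv_mul_cancel₀ (sub_ne_zero.2 hne), C_1]
  have hz : p ∣ z := by
    have := Dvd.dvd.mul_left (dvd_sub hμ hν) (C (μ - ν)⁻¹)
    have e : C (μ - ν)⁻¹ * (y + C μ * z - (y + C ν * z)) = z := by
      rw [C_sub] at hunit
      linear_combination z * hunit
    rwa [e] at this
  have hy : p ∣ y := (dvd_add_left (hz.mul_left _)).1 hμ
  exact h p hpp (UniqueFactorizationMonoid.dvd_of_mem_factors hp') hy hz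

/-! ### Generic change of generators -/

/-- A finite set of nonzero vectors whose multiples cover the affine common zero set. -/
lemma exists_finset_cover {x y z w : R3} (hfin : (projVanish {x, y, z, w}).Finite) :
    ∃ F : Finset (Fin 3 → ℂ), (∀ u ∈ F, u ≠ 0) ∧
      ∀ v : Fin 3 → ℂ, eval v x = 0 → eval v y = 0 → eval v z = 0 → eval v w = 0 →
        ∃ u ∈ F, ∃ c : ℂ, v = c • u := by
  classical
  -- the extra vector `1` only serves to cover the origin
  refine ⟨insert 1 (hfin.toFinset.image Projectivization.rep), ?_, ?_⟩
  · intro u hu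
    rcases Finset.mem_insert.1 hu with rfl | hu
    · exact one_ne_zero
    · obtain ⟨q, -, rfl⟩ := Finset.mem_image.1 hu
      exact q.rep_nonzero
  · intro v h1 h2 h3 h4
    by_cases hv : v = 0
    · exact ⟨1, Finset.mem_insert_self _ _, 0, by simp [hv]⟩
    · refine ⟨(Projectivization.mk ℂ v hv).rep, Finset.mem_insert_of_mem
        (Finset.mem_image_of_mem _ ?_), ?_⟩
      · rw [Set.Finite.mem_toFinset]
        refine ⟨v, hv, rfl, ?_⟩
        rintro p (rfl | rfl | rfl | rfl) <;> assumption
      · obtain ⟨a, ha⟩ := Projectivization.exists_smul_eq_mk_rep ℂ v hv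
        refine ⟨((a⁻¹ : ℂˣ) : ℂ), ?_⟩
        rw [← ha]
        change v = a⁻¹ • a • v
        rw [inv_smul_smul]

lemma X_pow_mul_mem_of_mem_satSet {J : Ideal R3} {w : R3} (hw : w ∈ satSet J) :
    ∃ k : ℕ, ∀ i, X i ^ k * w ∈ J := by
  obtain ⟨k, hk⟩ := hw
  exact ⟨k, fun i => hk _ (Ideal.pow_mem_pow (X_mem_irrelevant i) k)⟩

/-- A generic choice of `λ`, then `μ`, avoids finitely many nonzero linear conditions
`c - λ a - μ b = 0` together with any finite set of values of `μ` depending on `λ`. -/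
lemma exists_generic {ι : Type*} (F : Finset ι) (a b c : ι → ℂ)
    (h : ∀ u ∈ F, ¬ (a u = 0 ∧ b u = 0 ∧ c u = 0)) (S : ℂ → Set ℂ) (hS : ∀ l, (S l).Finite) :
    ∃ l m : ℂ, m ∉ S l ∧ ∀ u ∈ F, c u - l * a u - m * b u ≠ 0 := by
  classical
  obtain ⟨l, hl⟩ := (F.image fun u => c u / a u).finite_toSet.exists_notMem
  obtain ⟨m, hm⟩ := ((hS l).union
    (F.image fun u => (c u - l * a u) / b u).finite_toSet).exists_notMem
  rw [Set.mem_union, not_or] at hm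
  refine ⟨l, m, hm.1, fun u hu h0 => ?_⟩
  have hl' : c u / a u ≠ l := fun e => hl (by
    rw [← e]; exact Finset.mem_coe.2 (Finset.mem_image_of_mem (fun u => c u / a u) hu))
  have hm' : (c u - l * a u) / b u ≠ m := fun e => hm.2 (by
    rw [← e]
    exact Finset.mem_coe.2 (Finset.mem_image_of_mem (fun u => (c u - l * a u) / b u) hu))
  by_cases hb : b u = 0
  · by_cases ha : a u = 0
    · exact h u hu ⟨ha, hb, by simpa [ha, hb] using h0⟩
    · exact hl' (by rw [div_eq_iff ha]; linear_combination h0 + m * hb)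
  · exact hm' (by rw [div_eq_iff hb]; linear_combination h0)

lemma span_triple_add (x y z : R3) (l m : R3) :
    Ideal.span {x + l * z, y + m * z, z} = Ideal.span {x, y, z} := by
  apply le_antisymm <;> rw [Ideal.span_le]
  · have hz : z ∈ Ideal.span {x, y, z} := Ideal.subset_span (by simp)
    rintro p (rfl | rfl | rfl)
    · exact add_mem (Ideal.subset_span (by simp)) (Ideal.mul_mem_left _ _ hz)
    · exact add_mem (Ideal.subset_span (by simp)) (Ideal.mul_mem_left _ _ hz)
    · exact hz
  · have hz : z ∈ Ideal.span {x + l * z, y + m * z, z} := Ideal.subset_span (by simp)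
    rintro p (rfl | rfl | rfl)
    · exact (Ideal.add_mem_iff_left _ (Ideal.mul_mem_left _ l hz)).1
        (Ideal.subset_span (by simp))
    · exact (Ideal.add_mem_iff_left _ (Ideal.mul_mem_left _ m hz)).1
        (Ideal.subset_span (by simp))
    · exact hz

lemma span_quad_eq (x y z w : R3) :
    (Ideal.span {x, y, z, w} : Ideal R3) = Ideal.span {x, y, z} ⊔ Ideal.span {w} := by
  rw [← Ideal.span_union]
  congr 1
  ext p
  simp only [Set.mem_insert_iff, Set.mem_singleton_iff, Set.mem_union]
  tauto

theorem stmt2 (n d : ℕ) (x y z w : R3)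
    -- d ∈ {n-2, n-1}
    (hdn : d + 1 = n ∨ d + 2 = n)
    -- BP1
    (hx : x.IsHomogeneous n) (hy : y.IsHomogeneous n)
    (hz : z.IsHomogeneous n) (hw : w.IsHomogeneous n)
    (hBP1 : LinearIndependent ℂ ![x, y, z, w])
    -- BP2
    (hBP2fin : (projVanish {x, y, z, w}).Finite)
    (hBP2lci : IsLCI (Ideal.span {x, y, z, w}))
    -- BP3: D is the eventual constant value of `dim (R/I)_k`
    (D N : ℕ)
    (hD : ∀ k, N ≤ k → quotDim (Ideal.span {x, y, z, w}) k = D)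
    (hBP3 : quotDim (Ideal.span {x, y, z, w}) (d + n) = D)
    -- BP4
    (hBP4 : w ∈ satSet (Ideal.span {x, y, z}))
    -- BP5
    (hBP5 : ∀ A B C : R3, A.IsHomogeneous d → B.IsHomogeneous d → C.IsHomogeneous d →
      A * x + B * y + C * z = 0 → A = 0 ∧ B = 0 ∧ C = 0) :
    ∀ f : R3, f.IsHomogeneous (d + 2 * n) →
      f ∈ satSet (Ideal.span {x, y, z, w} ^ 2) →
      f ∈ Ideal.span {x, y, z, w} ^ 2 := by
  classical
  intro f hfh hf
  have hli := Fintype.linearIndependent_iff.1 hBP1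
  have hz0 : z ≠ 0 := hBP1.ne_zero 2
  have hx0 : ∀ l : ℂ, x + C l * z ≠ 0 := by
    intro l h0
    have := hli ![1, 0, l, 0] (by simpa [Fin.sum_univ_four, C_mul'] using h0) 0
    simp at this
  have hy0 : ∀ l : ℂ, y + C l * z ≠ 0 := by
    intro l h0
    have := hli ![0, 1, l, 0] (by simpa [Fin.sum_univ_four, C_mul'] using h0) 1
    simp at this
  obtain ⟨F, hF0, hFI⟩ := exists_finset_cover hBP2fin
  obtain ⟨k, hk⟩ := X_pow_mul_mem_of_mem_satSet hBP4
  have hJev : ∀ {v : Fin 3 → ℂ}, eval v x = 0 → eval v y = 0 → eval v z = 0 →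
      ∀ p ∈ Ideal.span {x, y, z}, eval v p = 0 := by
    intro v h1 h2 h3 p hp
    have : Ideal.span {x, y, z} ≤ RingHom.ker (eval v) := by
      rw [Ideal.span_le]
      rintro p (rfl | rfl | rfl) <;> assumption
    exact this hp
  have hwev : ∀ {v : Fin 3 → ℂ}, eval v x = 0 → eval v y = 0 → eval v z = 0 →
      eval v w = 0 := by
    intro v h1 h2 h3
    by_cases hv : v = 0
    · have := eval_smul_homog hw 0 v
      rwa [zero_smul, zero_pow (by omega), zero_mul, ← hv] at this
    · obtain ⟨i, hi⟩ := Function.ne_iff.1 hv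
      have := hJev h1 h2 h3 _ (hk i)
      rw [map_mul, map_pow, eval_X] at this
      exact (mul_eq_zero.1 this).resolve_left (pow_ne_zero _ hi)
  have hFJ : ∀ v : Fin 3 → ℂ, eval v x = 0 → eval v y = 0 → eval v z = 0 →
      ∃ u ∈ F, ∃ c : ℂ, v = c • u := fun v h1 h2 h3 => hFI v h1 h2 h3 (hwev h1 h2 h3)
  -- representatives of the base points
  set G := F.filter fun u => eval u x = 0 ∧ eval u y = 0 ∧ eval u z = 0 with hG
  have hsyz : ∀ u : Fin 3 → ℂ, ∃ (k : ℕ) (A B C : R3), u ∈ G → A.IsHomogeneous k ∧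
      B.IsHomogeneous k ∧ C.IsHomogeneous k ∧
      A * x + B * y + C * z = 0 ∧ ¬ (eval u A = 0 ∧ eval u B = 0 ∧ eval u C = 0) := by
    intro u
    by_cases huG : u ∈ G
    swap
    · exact ⟨0, 0, 0, 0, fun h => absurd h huG⟩
    obtain ⟨huF, h1, h2, h3⟩ := Finset.mem_filter.1 huG
    have hu0 := hF0 u huF
    have h4 := hwev h1 h2 h3
    have hI : Ideal.span {x, y, z, w} ≤ lineIdeal u := by
      rw [Ideal.span_le]
      rintro p (rfl | rfl | rfl | rfl)
      exacts [mem_lineIdeal_homog hx h1, mem_lineIdeal_homog hy h2, mem_lineIdeal_homog hz h3,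
        mem_lineIdeal_homog hw h4]
    have hmin := lineIdeal_mem_minimalPrimes hu0 hI hF0 fun v hv =>
      hFI v (hv _ (Ideal.subset_span (by simp))) (hv _ (Ideal.subset_span (by simp)))
        (hv _ (Ideal.subset_span (by simp))) (hv _ (Ideal.subset_span (by simp)))
    obtain ⟨a, b, hab⟩ := hBP2lci _ hmin inferInstance
    -- some coordinate is a unit locally at the base point, so `w` is locally redundant
    have hloc : Ideal.map (algebraMap R3 (Localization.AtPrime (lineIdeal u)))
        (Ideal.span {x, y, z}) = Ideal.span {a, b} := by
      rw [← hab, span_quad_eq, Ideal.map_sup, eq_comm, sup_eq_left, Ideal.map_span,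
        Set.image_singleton, Ideal.span_singleton_le_iff_mem]
      obtain ⟨i, hi⟩ := Function.ne_iff.1 hu0
      have hXi : (X i ^ k : R3) ∉ lineIdeal u := by
        intro h
        have := mem_lineIdeal.1 h 1
        simp only [one_smul, map_pow, eval_X] at this
        exact hi (by_contra fun h0 => pow_ne_zero k h0 this)
      have hunit := IsLocalization.map_units (Localization.AtPrime (lineIdeal u))
        (⟨X i ^ k, hXi⟩ : (lineIdeal u).primeCompl)
      have := Ideal.mem_map_of_mem (algebraMap R3 (Localization.AtPrime (lineIdeal u))) (hk i)
      rw [map_mul] at this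
      exact (Ideal.unit_mul_mem_iff_mem _ hunit).1 this
    obtain ⟨k, A, B, C, h⟩ := exists_homog_syzygy hx hy hz hloc
    exact ⟨k, A, B, C, fun _ => h⟩
  choose e A B Cc hABC using hsyz
  have hdvd : ∀ l : ℂ, ∀ p, Prime p → p ∣ x + C l * z → p ∣ y → p ∣ z → False :=
    fun l p hp h1 h2 h3 =>
      not_prime_dvd hF0 hFJ hp ((dvd_add_left (h3.mul_left _)).1 h1) h2 h3
  obtain ⟨l, m, hrel, hlm⟩ := exists_generic G (fun u => eval u (A u)) (fun u => eval u (B u))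
    (fun u => eval u (Cc u)) (fun u hu => (hABC u hu).2.2.2.2)
    (fun l => {μ : ℂ | ¬ IsRelPrime (x + C l * z) (y + C μ * z)})
    fun l => finite_not_relPrime (hx0 l) (hdvd l)
  have hrel' : IsRelPrime (x + C l * z) (y + C m * z) := not_not.1 hrel
  have hJ := span_triple_add x y z (C l) (C m)
  have hI : Ideal.span {x + C l * z, y + C m * z, z, w} = Ideal.span {x, y, z, w} := by
    rw [span_quad_eq, span_quad_eq, hJ]
  -- the colon ideal `(x', y') : z`
  let H : Ideal R3 := Submodule.comap (LinearMap.mulRight R3 z)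
    (Ideal.span {x + C l * z, y + C m * z})
  have hrad : (Ideal.span {X 0, X 1, X 2} : Ideal R3) ≤ (Ideal.span {x, y, z} ⊔ H).radical := by
    rw [← vanishingIdeal_zeroLocus_eq_radical (K := ℂ), Ideal.span_le]
    have key : ∀ v ∈ zeroLocus ℂ (Ideal.span {x, y, z} ⊔ H), v = 0 := by
      intro v hv
      have hv' : ∀ p ∈ Ideal.span {x, y, z} ⊔ H, eval v p = 0 := fun p hp => by
        simpa [aeval_eq_eval] using hv p hp
      by_contra hv0
      have hJ' : ∀ p ∈ Ideal.span {x, y, z}, eval v p = 0 := fun p hp =>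
        hv' p (Ideal.mem_sup_left hp)
      have h1 := hJ' x (Ideal.subset_span (by simp))
      have h2 := hJ' y (Ideal.subset_span (by simp))
      have h3 := hJ' z (Ideal.subset_span (by simp))
      obtain ⟨u, hu, c, rfl⟩ := hFJ v h1 h2 h3
      have hc : c ≠ 0 := by rintro rfl; simp at hv0
      have hcn : c ^ n ≠ 0 := pow_ne_zero _ hc
      rw [eval_smul_homog hx] at h1
      rw [eval_smul_homog hy] at h2
      rw [eval_smul_homog hz] at h3
      have huG : u ∈ G := Finset.mem_filter.2 ⟨hu, (mul_eq_zero.1 h1).resolve_left hcn,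
        (mul_eq_zero.1 h2).resolve_left hcn, (mul_eq_zero.1 h3).resolve_left hcn⟩
      obtain ⟨hA, hB, hC, hs, -⟩ := hABC u huG
      have hmem : Cc u - C l * A u - C m * B u ∈ H := by
        change (Cc u - C l * A u - C m * B u) * z ∈ Ideal.span {x + C l * z, y + C m * z}
        rw [Ideal.mem_span_pair]
        exact ⟨-A u, -B u, by linear_combination -hs⟩
      have := hv' _ (Ideal.mem_sup_right hmem)
      simp only [map_sub, map_mul, eval_C, eval_smul_homog hA, eval_smul_homog hB,
        eval_smul_homog hC] at this
      refine hlm u huG ((mul_eq_zero.1 (?_ : c ^ e u * _ = 0)).resolve_left (pow_ne_zero _ hc))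
      linear_combination this
    rintro p (rfl | rfl | rfl) <;>
    · rw [SetLike.mem_coe, mem_vanishingIdeal_iff]
      intro v hv
      simp [key v hv]
  obtain ⟨M, hM⟩ := Ideal.exists_pow_le_of_le_radical_of_fg hrad
    (IsNoetherian.noetherian _)
  have hCz : ∀ c : ℂ, (C c * z).IsHomogeneous n := fun c => by
    simpa using (isHomogeneous_C (Fin 3) c).mul hz
  rw [← hI] at hf hD hBP3 ⊢
  rw [← hJ] at hM hBP4
  exact core hdn (hx.add (hCz l)) (hy.add (hCz m)) hz hrel' (hx0 l) (hy0 m) hz0 (H := H)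
    (fun h hh => hh) hM hBP4 hD hBP3 hfh hf
end

section
/- Let x, y, z, w ∈ R be homogeneous of degree n and let A be a 4×3 matrix with entries in R, the entries of column j homogeneous of degree μ_j, such that: (i) the signed maximal minors (−1)^{i+1} det A^(i) (deleting row i) equal x, y, z, w, which are not all zero; and (ii) every quadruple (a,b,c,e) ∈ R⁴ with ax+by+cz+ew = 0 is an R-linear combination of the columns of A. Let v₀ ∈ ℂ³ ∖ {0} be a common zero of x, y, z, w, let 𝔭 ⊂ R be the (homogeneous, height two) prime ideal of all polynomials vanishing at every scalar multiple of v₀, and assume the ideal generated by I = ⟨x,y,z,w⟩ in the localization R_𝔭 is generated by two elements. Then the evaluated matrix A(v₀) ∈ M_{4×3}(ℂ) has rank exactly 2; equivalently, the solutions (X₀,Y₀,Z₀,W₀) ∈ ℂ⁴ of the linear system given by evaluating the three column syzygies of A at v₀ form a 2-dimensional subspace, i.e. a line L_p in ℙ³. -/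
/-!
The common zeros `u` of the three evaluated syzygies form the left kernel of `A(v₀)`, so by
rank-nullity both claims say that this kernel has dimension two.

It has dimension at least two because the maximal minors of `A(v₀)` are the values of
`±x, ±y, ±z, ±w` at `v₀`, hence vanish (`rank_le_two_of_minors`).

For the upper bound, write `f = (x, y, z, w)`. Expressing two local generators of `I` through `f`
and `f` through them, and clearing denominators, gives `s ∉ 𝔭` and polynomial vectors
`g, d, α, β` with `s² fᵢ = ∑ₖ (gᵢ αₖ + dᵢ βₖ) fₖ` (`exists_clear_denominators`). Thus the rows of
`s² • 1 - g αᵀ - d βᵀ` are syzygies of `f`, hence combinations of the columns of `A`. Since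
`s ∉ 𝔭`, some multiple `c v₀` has `s(c v₀) ≠ 0`. By homogeneity of the columns, a vector `u` in the
left kernel of `A(v₀)` is also in that of `A(c v₀)`, so evaluating at `c v₀` gives
`s² uᵢ = gᵢ (α ⬝ u) + dᵢ (β ⬝ u)`: the vector `u` is determined by the two numbers `α ⬝ u` and
`β ⬝ u`.
-/

open MvPolynomial

/-- A `4 × 3` matrix whose maximal minors vanish has rank at most two: otherwise its columns are
independent, and prepending a column outside their span gives an invertible `4 × 4` matrix, whose
determinant is a combination of the minors. -/
theorem rank_le_two_of_minors (M : Matrix (Fin 4) (Fin 3) ℂ)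
    (h : ∀ i : Fin 4, (M.submatrix i.succAbove id).det = 0) : M.rank ≤ 2 := by
  by_contra hr
  have hrn := LinearMap.finrank_range_add_finrank_ker M.mulVecLin
  have hrank : M.rank = Module.finrank ℂ (LinearMap.range M.mulVecLin) := rfl
  have h3 := M.rank_le_width
  simp only [Module.finrank_fin_fun] at hrn
  have hker : LinearMap.ker M.mulVecLin = ⊥ := Submodule.finrank_eq_zero.mp (by omega)
  have hrange : LinearMap.range M.mulVecLin ≠ ⊤ := by
    intro ht
    rw [ht, finrank_top, Module.finrank_fin_fun] at hrank
    omega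
  obtain ⟨a, ha⟩ : ∃ a, a ∉ LinearMap.range M.mulVecLin := by
    by_contra! hall
    exact hrange (eq_top_iff.mpr fun a _ => hall a)
  let N : Matrix (Fin 4) (Fin 4) ℂ := Matrix.of fun i => Fin.cons (a i) (M i)
  have hdet : N.det = 0 := by
    rw [Matrix.det_succ_column_zero]
    refine Finset.sum_eq_zero fun i _ => ?_
    have : N.submatrix i.succAbove Fin.succ = M.submatrix i.succAbove id := by
      ext p q
      simp [N]
    rw [this, h i, mul_zero]
  obtain ⟨v, hv, hNv⟩ := Matrix.exists_mulVec_eq_zero_iff.mpr hdet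
  have hsum : v 0 • a + M.mulVecLin (Fin.tail v) = 0 := by
    ext i
    have := congrFun hNv i
    simp only [Matrix.mulVec, dotProduct, Fin.sum_univ_succ (n := 3), N, Matrix.of_apply,
      Fin.cons_zero, Fin.cons_succ, Pi.zero_apply] at this
    simp only [Pi.add_apply, Pi.smul_apply, smul_eq_mul, Matrix.mulVecLin_apply, Matrix.mulVec,
      dotProduct, Fin.tail, Pi.zero_apply]
    linear_combination this
  by_cases hv0 : v 0 = 0
  · rw [hv0, zero_smul, zero_add] at hsum
    have ht : Fin.tail v = 0 := by
      have : Fin.tail v ∈ LinearMap.ker M.mulVecLin := hsum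
      rwa [hker, Submodule.mem_bot] at this
    apply hv
    ext i
    refine Fin.cases hv0 (fun j => congrFun ht j) i
  · apply ha
    refine ⟨-(v 0)⁻¹ • Fin.tail v, ?_⟩
    rw [map_smul, eq_neg_of_add_eq_zero_right hsum, smul_neg, neg_smul, neg_neg, smul_smul,
      inv_mul_cancel₀ hv0, one_smul]

theorem eval_smul_of_isHomogeneous {m : ℕ} {f : R3} (hf : f.IsHomogeneous m) (c : ℂ)
    (v : Fin 3 → ℂ) : MvPolynomial.eval (c • v) f = c ^ m * MvPolynomial.eval v f := by
  rw [MvPolynomial.eval_eq, MvPolynomial.eval_eq, Finset.mul_sum]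
  refine Finset.sum_congr rfl fun e he => ?_
  have hdeg : ∑ i ∈ e.support, e i = m := by
    rw [← Finsupp.degree_apply, Finsupp.degree_eq_weight_one]
    exact hf (MvPolynomial.mem_support_iff.mp he)
  simp only [Pi.smul_apply, smul_eq_mul, mul_pow, Finset.prod_mul_distrib]
  rw [Finset.prod_pow_eq_pow_sum, hdeg]
  ring

/-- If the ideal generated by a finite family `f` becomes generated by two elements at a prime,
then, up to a denominator `s` outside the prime, `f` is fixed by a matrix that is a sum of two
rank one matrices. -/
theorem exists_clear_denominators {R ι : Type*} [CommRing R] [IsDomain R] [Fintype ι]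
    (𝔭 : Ideal R) [𝔭.IsPrime] (f : ι → R)
    (h : ∃ a b : Localization.AtPrime 𝔭,
      Ideal.map (algebraMap R (Localization.AtPrime 𝔭)) (Ideal.span (Set.range f)) =
        Ideal.span {a, b}) :
    ∃ s ∉ 𝔭, ∃ g d α β : ι → R,
      ∀ i, s ^ 2 * f i = ∑ k, (g i * α k + d i * β k) * f k := by
  obtain ⟨a, b, hab⟩ := h
  set φ := algebraMap R (Localization.AtPrime 𝔭)
  have hinj : Function.Injective φ :=
    IsLocalization.injective _ 𝔭.primeCompl_le_nonZeroDivisors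
  rw [Ideal.map_span, ← Set.range_comp] at hab
  have ha : a ∈ Ideal.span (Set.range (φ ∘ f)) := hab ▸ Ideal.subset_span (by simp)
  have hb : b ∈ Ideal.span (Set.range (φ ∘ f)) := hab ▸ Ideal.subset_span (by simp)
  obtain ⟨α, hα⟩ := (Submodule.mem_span_range_iff_exists_fun _).mp ha
  obtain ⟨β, hβ⟩ := (Submodule.mem_span_range_iff_exists_fun _).mp hb
  have hf : ∀ i, ∃ p q, p * a + q * b = φ (f i) := fun i =>
    Ideal.mem_span_pair.mp (hab ▸ Ideal.subset_span ⟨i, rfl⟩)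
  choose g d hgd using hf
  obtain ⟨s, hs⟩ := IsLocalization.exist_integer_multiples_of_finite 𝔭.primeCompl
    (fun p : Fin 4 × ι => (![g, d, α, β] p.1) p.2)
  choose F hF using hs
  refine ⟨s, s.2, fun i => F (0, i), fun i => F (1, i), fun i => F (2, i), fun i => F (3, i),
    fun i => hinj ?_⟩
  have h0 : ∀ i, φ (F (0, i)) = φ s * g i := fun i => by
    simpa [Algebra.smul_def] using hF (0, i)
  have h1 : ∀ i, φ (F (1, i)) = φ s * d i := fun i => by
    simpa [Algebra.smul_def] using hF (1, i)
  have h2 : ∀ i, φ (F (2, i)) = φ s * α i := fun i => by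
    simpa [Algebra.smul_def] using hF (2, i)
  have h3 : ∀ i, φ (F (3, i)) = φ s * β i := fun i => by
    simpa [Algebra.smul_def] using hF (3, i)
  simp only [map_mul, map_pow, map_sum, map_add, h0, h1, h2, h3]
  rw [← hgd i, ← hα, ← hβ]
  simp only [smul_eq_mul, Function.comp_apply, Finset.mul_sum, ← Finset.sum_add_distrib]
  exact Finset.sum_congr rfl fun k _ => by ring

theorem stmt6 (n : ℕ) (x y z w : R3)
    (hx : x.IsHomogeneous n) (hy : y.IsHomogeneous n)
    (hz : z.IsHomogeneous n) (hw : w.IsHomogeneous n)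
    (hne : ![x, y, z, w] ≠ 0)
    (A : Matrix (Fin 4) (Fin 3) R3) (μ : Fin 3 → ℕ)
    -- the entries of column `j` are homogeneous of degree `μ j`
    (hcol : ∀ (i : Fin 4) (j : Fin 3), (A i j).IsHomogeneous (μ j))
    -- (i) the signed maximal minors of `A` are `x, y, z, w`
    (hA : ∀ i : Fin 4,
      (-1 : R3) ^ (i : ℕ) * (A.submatrix i.succAbove id).det = ![x, y, z, w] i)
    -- (ii) every syzygy of `x, y, z, w` is an `R`-linear combination of the columns of `A`
    (hsyz : ∀ a : Fin 4 → R3,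
      a 0 * x + a 1 * y + a 2 * z + a 3 * w = 0 →
      ∃ c : Fin 3 → R3, ∀ i, a i = ∑ j : Fin 3, c j * A i j)
    -- `v₀` is a nonzero common zero of `x, y, z, w`
    (v₀ : Fin 3 → ℂ) (hv₀ : v₀ ≠ 0)
    (hvan : ∀ i : Fin 4, MvPolynomial.eval v₀ (![x, y, z, w] i) = 0)
    -- `𝔭` is the prime ideal of all polynomials vanishing at every scalar multiple of `v₀`
    (𝔭 : Ideal R3) [h𝔭 : 𝔭.IsPrime]
    (h𝔭mem : ∀ f : R3, f ∈ 𝔭 ↔ ∀ c : ℂ, MvPolynomial.eval (c • v₀) f = 0)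
    -- `I` is a local complete intersection at `𝔭`
    (hlci : ∃ a b : Localization.AtPrime 𝔭,
      Ideal.map (algebraMap R3 (Localization.AtPrime 𝔭)) (Ideal.span {x, y, z, w}) =
        Ideal.span {a, b}) :
    -- the evaluated matrix has rank exactly 2; equivalently the solutions of the
    -- evaluated syzygy system form a 2-dimensional subspace of `ℂ⁴`
    (A.map (MvPolynomial.eval v₀)).rank = 2 ∧
      Module.finrank ℂ
        (LinearMap.ker (Matrix.vecMulLinear (A.map (MvPolynomial.eval v₀)))) = 2 := by
  set M := A.map (MvPolynomial.eval v₀) with hM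
  have hle : M.rank ≤ 2 := by
    refine rank_le_two_of_minors M fun i => ?_
    have h := hvan i
    rw [← hA i, map_mul, RingHom.map_det] at h
    refine (mul_eq_zero.mp h).resolve_left ?_
    simp
  have hrn := LinearMap.finrank_range_add_finrank_ker (Matrix.vecMulLinear M)
  have hrank : Module.finrank ℂ (LinearMap.range (Matrix.vecMulLinear M)) = M.rank := by
    rw [← Matrix.rank_transpose, Matrix.rank, Matrix.mulVecLin_transpose]
  rw [hrank, Module.finrank_fin_fun] at hrn
  suffices hker : Module.finrank ℂ (LinearMap.ker (Matrix.vecMulLinear M)) ≤ 2 by omega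
  have hset : ({x, y, z, w} : Set R3) = Set.range ![x, y, z, w] := by
    ext q
    simp [eq_comm]
    tauto
  rw [hset] at hlci
  obtain ⟨s, hs, g, d, α, β, hfix⟩ := exists_clear_denominators 𝔭 _ hlci
  obtain ⟨c, hc⟩ : ∃ c : ℂ, MvPolynomial.eval (c • v₀) s ≠ 0 := by
    by_contra! hall
    exact hs ((h𝔭mem s).mpr hall)
  -- row `i` of `s² • 1 - g αᵀ - d βᵀ` is a syzygy
  have hC : ∀ i, ∃ C : Fin 3 → R3, ∀ k,
      (if i = k then s ^ 2 else 0) - (g i * α k + d i * β k) = ∑ j, C j * A k j := by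
    intro i
    refine hsyz (fun k => (if i = k then s ^ 2 else 0) - (g i * α k + d i * β k)) ?_
    have h := hfix i
    simp only [Fin.sum_univ_four] at h
    fin_cases i <;> simp at h ⊢ <;> linear_combination h
  choose C hC using hC
  let e := MvPolynomial.eval (c • v₀)
  let L : (Fin 4 → ℂ) →ₗ[ℂ] (Fin 2 → ℂ) :=
    Matrix.mulVecLin (Matrix.of ![fun k => e (α k), fun k => e (β k)])
  have hL : Function.Injective (L.domRestrict (LinearMap.ker (Matrix.vecMulLinear M))) := by
    rw [← LinearMap.ker_eq_bot, LinearMap.ker_eq_bot']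
    rintro ⟨u, hu⟩ hLu
    have hα : ∑ k, e (α k) * u k = 0 := congrFun hLu 0
    have hβ : ∑ k, e (β k) * u k = 0 := congrFun hLu 1
    have huA : ∀ j, ∑ k, u k * e (A k j) = 0 := by
      intro j
      have h : ∑ k, u k * MvPolynomial.eval v₀ (A k j) = 0 := congrFun hu j
      calc ∑ k, u k * e (A k j) = c ^ μ j * ∑ k, u k * MvPolynomial.eval v₀ (A k j) := by
            rw [Finset.mul_sum]
            refine Finset.sum_congr rfl fun k _ => ?_
            rw [show e (A k j) = _ from eval_smul_of_isHomogeneous (hcol k j) c v₀]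
            ring
        _ = 0 := by rw [h, mul_zero]
    have hzero : ∀ i, u i = 0 := by
      intro i
      have h1 : ∑ k, e ((if i = k then s ^ 2 else 0) - (g i * α k + d i * β k)) * u k = 0 := by
        simp only [hC, map_sum, map_mul, Finset.sum_mul]
        rw [Finset.sum_comm]
        refine Finset.sum_eq_zero fun j _ => ?_
        calc ∑ k, e (C i j) * e (A k j) * u k = e (C i j) * ∑ k, u k * e (A k j) := by
              rw [Finset.mul_sum]
              exact Finset.sum_congr rfl fun k _ => by ring
          _ = 0 := by rw [huA, mul_zero]
      have h2 : ∑ k, e ((if i = k then s ^ 2 else 0) - (g i * α k + d i * β k)) * u k =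
          e s ^ 2 * u i - e (g i) * ∑ k, e (α k) * u k - e (d i) * ∑ k, e (β k) * u k := by
        have h3 : e s ^ 2 * u i = ∑ k, e (if i = k then s ^ 2 else 0) * u k := by
          simp [apply_ite e]
        rw [h3, Finset.mul_sum, Finset.mul_sum, ← Finset.sum_sub_distrib,
          ← Finset.sum_sub_distrib]
        refine Finset.sum_congr rfl fun k _ => ?_
        rw [map_sub, map_add, map_mul, map_mul]
        ring
      rw [h1, hα, hβ, mul_zero, mul_zero, sub_zero, sub_zero] at h2
      exact (mul_eq_zero.mp h2.symm).resolve_left (pow_ne_zero 2 hc)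
    exact Subtype.ext (funext hzero)
  have := LinearMap.finrank_le_finrank_of_injective hL
  rwa [Module.finrank_fin_fun] at this
end

section
/- Fix integers m ≥ 1, n ≥ 1, N ≥ 1, and let q₁, …, q_N ∈ ℂ[x₀,…,x_m] be homogeneous polynomials of degree n such that the set of their common zeros in ℂ^{m+1} ∖ {0}, taken up to nonzero scalar multiples (i.e., its image in the projectivization of ℂ^{m+1}), is finite. Then there is a nonzero polynomial G in (m+1)·N variables over ℂ such that for every matrix (a_{ij}) ∈ ℂ^{(m+1)×N} with G((a_{ij})) ≠ 0, the m+1 linear combinations s_i = Σ_j a_{ij} q_j (i = 0, …, m) satisfy: the set of common zeros of s₀, …, s_m in ℂ^{m+1} equals the set of common zeros of q₁, …, q_N in ℂ^{m+1}. -/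
/-!
The bad matrices `a`, those for which `s₀, …, s_m` acquire a common zero `v` outside the common zero
locus of the `q j`, depend on at most `m + (m + 1)(N - 1) = (m + 1)N - 1` parameters, hence lie in a
proper hypersurface.

Concretely, let `v` be such a zero, with `q j₀ v ≠ 0`. Since `n ≥ 1`, `v ≠ 0`, and by homogeneity
`v` may be rescaled so that `v k = 1` for some `k`. Solving `∑ j, a i j * q j v = 0` for `a i j₀` and
putting `b i j = a i j / q j₀ v` for `j ≠ j₀` gives
`a i j = b i j * q j₀ v` for `j ≠ j₀`, and `a i j₀ = - ∑_{j ≠ j₀} b i j * q j v`.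
So `a` is in the image of a polynomial map (`badParam`) in the variables `v l` (`l ≠ k`) and `b i j`
(`j ≠ j₀`), which are fewer than the entries of `a`. A comparison of transcendence degrees
(`exists_ne_zero_aeval_eq_zero`) yields a nonzero polynomial vanishing on that image, and `G` is the
product of these polynomials over all pairs `(k, j₀)`.
-/

open MvPolynomial

/-- More polynomials than variables are algebraically dependent. -/
lemma exists_ne_zero_aeval_eq_zero {K σ τ : Type} [Field K] [Fintype σ] [Fintype τ]
    (h : Fintype.card σ < Fintype.card τ) (f : τ → MvPolynomial σ K) :
    ∃ G : MvPolynomial τ K, G ≠ 0 ∧ aeval f G = 0 := by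
  by_contra! hG
  have hf : AlgebraicIndependent K f :=
    algebraicIndependent_iff.mpr fun p hp => by_contra fun hp0 => hG p hp0 hp
  have h1 := hf.cardinalMk_le_trdeg
  have h2 := (IsTranscendenceBasis.mvPolynomial σ K).cardinalMk_eq_trdeg
  rw [← h2, Cardinal.mk_fintype, Cardinal.mk_fintype, Nat.cast_le] at h1
  omega

lemma eval_smul_of_isHomogeneous_s7 {K σ : Type} [Field K] {n : ℕ}
    {p : MvPolynomial σ K} (hp : p.IsHomogeneous n) (c : K) (v : σ → K) :
    eval (c • v) p = c ^ n * eval v p := by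
  rw [eval_eq, eval_eq, Finset.mul_sum]
  refine Finset.sum_congr rfl fun d hd => ?_
  rw [hp.degree_eq_sum_deg_support hd, ← Finset.prod_pow_eq_pow_sum]
  simp only [Pi.smul_apply, smul_eq_mul, mul_pow, Finset.prod_mul_distrib]
  ring

/-- The variables of the parametrization of bad matrices: the affine coordinates `v l`, `l ≠ k`, of
a point with `v k = 1`, and the entries `b i j`, `j ≠ j₀`. -/
abbrev BadVars (m N : ℕ) (k : Fin (m + 1)) (j₀ : Fin N) : Type :=
  {l : Fin (m + 1) // l ≠ k} ⊕ (Fin (m + 1) × {j : Fin N // j ≠ j₀})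

/-- The generic point of the affine chart `v k = 1`. -/
noncomputable def chartPoint (m N : ℕ) (k : Fin (m + 1)) (j₀ : Fin N) (l : Fin (m + 1)) :
    MvPolynomial (BadVars m N k j₀) ℂ :=
  if h : l = k then 1 else X (Sum.inl ⟨l, h⟩)

/-- The generic matrix `a` with `∑ j, a i j * q j v = 0` for all `i`, where `v` is the generic point
of the chart `v k = 1`: its entries are `b i j * q j₀ v` for `j ≠ j₀` and
`- ∑_{j ≠ j₀} b i j * q j v` for `j = j₀`. -/
noncomputable def badParam {m N : ℕ} (q : Fin N → MvPolynomial (Fin (m + 1)) ℂ)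
    (k : Fin (m + 1)) (j₀ : Fin N) (p : Fin (m + 1) × Fin N) :
    MvPolynomial (BadVars m N k j₀) ℂ :=
  if h : p.2 = j₀ then
    - ∑ j : {j : Fin N // j ≠ j₀}, X (Sum.inr (p.1, j)) * aeval (chartPoint m N k j₀) (q j)
  else X (Sum.inr (p.1, ⟨p.2, h⟩)) * aeval (chartPoint m N k j₀) (q j₀)

lemma card_badVars_lt (m N : ℕ) (k : Fin (m + 1)) (j₀ : Fin N) :
    Fintype.card (BadVars m N k j₀) < Fintype.card (Fin (m + 1) × Fin N) := by
  obtain ⟨N, rfl⟩ : ∃ M, N = M + 1 := ⟨N - 1, by have := j₀.isLt; omega⟩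
  simp only [BadVars, Fintype.card_sum, Fintype.card_prod, Fintype.card_fin, ne_eq,
    Fintype.card_subtype_compl, Fintype.card_subtype_eq, Nat.add_sub_cancel, mul_add]
  omega

/-- Every bad matrix whose witness `w` is normalized by `w k = 1` is a value of `badParam`. -/
lemma exists_eval_badParam {m N : ℕ} (q : Fin N → MvPolynomial (Fin (m + 1)) ℂ)
    (k : Fin (m + 1)) (j₀ : Fin N) (w : Fin (m + 1) → ℂ) (hk : w k = 1)
    (hj : eval w (q j₀) ≠ 0) (a : Fin (m + 1) → Fin N → ℂ)
    (ha : ∀ i, ∑ j, a i j * eval w (q j) = 0) :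
    ∃ t : BadVars m N k j₀ → ℂ, ∀ p, eval t (badParam q k j₀ p) = a p.1 p.2 := by
  let t : BadVars m N k j₀ → ℂ :=
    Sum.elim (fun l => w l) (fun p => a p.1 p.2 / eval w (q j₀))
  have hpt : ∀ l, eval t (chartPoint m N k j₀ l) = w l := by
    intro l
    unfold chartPoint
    split_ifs with h
    · simp [h, hk]
    · simp [t]
  have hq : ∀ Q : MvPolynomial (Fin (m + 1)) ℂ,
      eval t (aeval (chartPoint m N k j₀) Q) = eval w Q := by
    intro Q
    have : (aeval t).comp (aeval (chartPoint m N k j₀)) = aeval (R := ℂ) w := by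
      ext l
      simpa [coe_aeval_eq_eval] using hpt l
    simpa [coe_aeval_eq_eval] using DFunLike.congr_fun this Q
  refine ⟨t, fun ⟨i, j⟩ => ?_⟩
  unfold badParam
  split_ifs with h
  · dsimp only at h
    subst h
    have hi := ha i
    rw [← Fintype.sum_subtype_add_sum_subtype (fun j' => j' ≠ j)] at hi
    have hu : ∑ j' : {x // ¬ x ≠ j}, a i j' * eval w (q j') = a i j * eval w (q j) := by
      rw [Fintype.sum_eq_single ⟨j, by simp⟩]
      intro x hx
      exact absurd (Subtype.ext (not_not.mp x.2)) hx
    rw [hu] at hi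
    simp only [map_neg, map_sum, map_mul, hq, eval_X, t, Sum.elim_inr]
    simp only [div_mul_eq_mul_div, ← Finset.sum_div]
    rw [← neg_div, div_eq_iff hj]
    linear_combination -hi
  · simp only [map_mul, hq, eval_X, t, Sum.elim_inr]
    exact div_mul_cancel₀ _ hj

theorem stmt7 (m n N : ℕ) (hm : 1 ≤ m) (hn : 1 ≤ n) (hN : 1 ≤ N)
    (q : Fin N → MvPolynomial (Fin (m + 1)) ℂ)
    (hq : ∀ j, (q j).IsHomogeneous n)
    -- the common zero locus of the `q j` in `ℂ^{m+1} ∖ {0}`, viewed in the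
    -- projectivization of `ℂ^{m+1}`, is finite
    (hfin : {p : Projectivization ℂ (Fin (m + 1) → ℂ) |
        ∃ (v : Fin (m + 1) → ℂ) (hv : v ≠ 0), p = Projectivization.mk ℂ v hv ∧
          ∀ j, MvPolynomial.eval v (q j) = 0}.Finite) :
    ∃ G : MvPolynomial (Fin (m + 1) × Fin N) ℂ, G ≠ 0 ∧
      ∀ a : Fin (m + 1) → Fin N → ℂ,
        MvPolynomial.eval (fun p : Fin (m + 1) × Fin N => a p.1 p.2) G ≠ 0 →
        {v : Fin (m + 1) → ℂ |
            ∀ i : Fin (m + 1),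
              MvPolynomial.eval v (∑ j : Fin N, MvPolynomial.C (a i j) * q j) = 0} =
          {v : Fin (m + 1) → ℂ | ∀ j : Fin N, MvPolynomial.eval v (q j) = 0} := by
  choose G hG0 hG using fun (k : Fin (m + 1)) (j₀ : Fin N) =>
    exists_ne_zero_aeval_eq_zero (card_badVars_lt m N k j₀) (badParam q k j₀)
  refine ⟨∏ k, ∏ j₀, G k j₀,
    Finset.prod_ne_zero_iff.mpr fun k _ => Finset.prod_ne_zero_iff.mpr fun j _ => hG0 k j, ?_⟩
  intro a ha
  simp only [map_prod, Finset.prod_ne_zero_iff, Finset.mem_univ, true_imp_iff] at ha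
  ext v
  simp only [Set.mem_ofPred_eq, map_sum, map_mul, eval_C]
  refine ⟨fun hv => ?_, fun hv i => by simp [hv]⟩
  by_contra! hne
  obtain ⟨j₀, hj₀⟩ := hne
  obtain ⟨k, hk⟩ : ∃ k, v k ≠ 0 := by
    by_contra! h0
    apply hj₀
    -- `v = 0` is a zero of every form of positive degree
    have hv0 : v = (0 : ℂ) • v := by ext l; simp [h0 l]
    rw [hv0, eval_smul_of_isHomogeneous_s7 (hq j₀), zero_pow (by omega), zero_mul]
  have hscale : ∀ j, eval ((v k)⁻¹ • v) (q j) = (v k)⁻¹ ^ n * eval v (q j) :=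
    fun j => eval_smul_of_isHomogeneous_s7 (hq j) _ _
  obtain ⟨t, ht⟩ := exists_eval_badParam q k j₀ ((v k)⁻¹ • v) (by simp [hk])
    (by rw [hscale]; exact mul_ne_zero (pow_ne_zero _ (inv_ne_zero hk)) hj₀) a
    (fun i => by
      simp only [hscale, mul_left_comm (a i _), ← Finset.mul_sum, hv i, mul_zero])
  refine ha k j₀ ?_
  have hcomp : (aeval t).comp (aeval (badParam q k j₀)) =
      aeval (R := ℂ) (fun p : Fin (m + 1) × Fin N => a p.1 p.2) := by
    ext p
    simpa [coe_aeval_eq_eval] using ht p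
  have := DFunLike.congr_fun hcomp (G k j₀)
  rw [AlgHom.comp_apply, hG, map_zero] at this
  simpa [coe_aeval_eq_eval] using this.symm
end

section
/- Let x, y, z, w ∈ ℂ[s,t,u] be homogeneous of degree n ≥ 1 with no common factor, i.e., every polynomial dividing all of x, y, z, w is a unit. Then there is a nonzero polynomial G in 12 variables over ℂ such that for every matrix (a_{ij}) ∈ ℂ^{3×4} with G((a_{ij})) ≠ 0, the linear combinations x' = a_{11}x+a_{12}y+a_{13}z+a_{14}w, y' = a_{21}x+a_{22}y+a_{23}z+a_{24}w, z' = a_{31}x+a_{32}y+a_{33}z+a_{34}w satisfy: the set of common zeros of x', y', z' in ℂ³ equals the set of common zeros of x, y, z, w in ℂ³. -/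
/-!
The map `q ↦ (x(q), y(q), z(q), w(q))` sends `ℂ³` into `ℂ⁴`, so its image lies on a hypersurface:
four polynomials in three variables satisfy a nontrivial relation `F`, and as `x, y, z, w` are
homogeneous of the same positive degree, `F` may be taken homogeneous
(`exists_homogeneous_relation`). The vector `m(A)` of signed maximal minors of a `3 × 4` matrix `A`
is proportional to every vector in the kernel of `A` (`minors_proportional`). Take
`G(A) = F(m(A))`. If `q` is a common zero of the three combinations given by `A`, the vector
`v = (x(q), y(q), z(q), w(q))` lies in the kernel of `A`; if moreover `v ≠ 0`, then `m(A) = c v` and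
`G(A) = c ^ d * F(v) = 0`. Finally `G ≠ 0`, because for every `p` with `p 0 ≠ 0` the vector
`(p 0) ^ 2 • p` is the vector of minors of some matrix (`minors_witness`).
-/

open MvPolynomial

/-- The vector of signed maximal minors of a `3 × 4` matrix `A`, encoded as the first column of the
adjugate of the `4 × 4` matrix obtained by putting a zero row on top of `A`; that column does not
depend on the added row. -/
def minors {S : Type*} [CommRing S] (A : Fin 3 → Fin 4 → S) (j : Fin 4) : S :=
  (Matrix.of (Fin.cons 0 A : Fin 4 → Fin 4 → S)).adjugate j 0

/-- Cramer's rule: `adj M * (M v) = det M • v` for the matrix `M` with rows `eⱼ` and those of `A`;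
its determinant is the `j`-th minor, and `M v = v j • e₀`. -/
lemma minors_proportional {S : Type*} [CommRing S] (A : Fin 3 → Fin 4 → S) (v : Fin 4 → S)
    (h : ∀ i, ∑ j, A i j * v j = 0) (i j : Fin 4) :
    minors A j * v i = minors A i * v j := by
  set M : Matrix (Fin 4) (Fin 4) S := Matrix.of (Fin.cons (Pi.single j 1) A) with hM
  have hrow : ∀ b : Fin 4 → S,
      (Matrix.of (Fin.cons 0 A : Fin 4 → Fin 4 → S)).updateRow 0 b = Matrix.of (Fin.cons b A) := by
    intro b
    ext k l
    refine Fin.cases ?_ (fun k => ?_) k <;> simp [Matrix.updateRow_apply]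
  have hrow' : ∀ b : Fin 4 → S, M.updateRow 0 b = Matrix.of (Fin.cons b A) := by
    intro b
    ext k l
    refine Fin.cases ?_ (fun k => ?_) k <;> simp [Matrix.updateRow_apply, hM]
  have hdet : minors A j = M.det := by
    rw [minors, Matrix.adjugate_apply, hrow]
  have hadj : minors A i = M.adjugate i 0 := by
    rw [minors, Matrix.adjugate_apply, Matrix.adjugate_apply, hrow, hrow']
  have hMv : M.mulVec v = Pi.single 0 (v j) := by
    ext k
    refine Fin.cases ?_ (fun k => ?_) k
    · simp [Matrix.mulVec, hM, dotProduct, Pi.single_apply]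
    · simpa [Matrix.mulVec, hM, dotProduct] using h k
  have key : (M.adjugate * M).mulVec v = M.adjugate.mulVec (M.mulVec v) :=
    (Matrix.mulVec_mulVec _ _ _).symm
  rw [Matrix.adjugate_mul, hMv, Matrix.smul_mulVec, Matrix.one_mulVec] at key
  have := congrFun key i
  simpa [hdet, hadj] using this

lemma map_minors {S T : Type*} [CommRing S] [CommRing T] (f : S →+* T) (A : Fin 3 → Fin 4 → S)
    (j : Fin 4) : f (minors A j) = minors (fun i k => f (A i k)) j := by
  have h := f.map_adjugate (Matrix.of (Fin.cons 0 A : Fin 4 → Fin 4 → S))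
  have h' := congrFun (congrFun h j) 0
  have e : f.mapMatrix (Matrix.of (Fin.cons 0 A : Fin 4 → Fin 4 → S)) =
      Matrix.of (Fin.cons 0 (fun i k => f (A i k)) : Fin 4 → Fin 4 → T) := by
    ext k l
    refine Fin.cases ?_ (fun k => ?_) k <;> simp
  rw [e] at h'
  simpa [minors] using h'

/-- Every vector `p` is, up to the factor `(p 0) ^ 2`, the vector of minors of some matrix. -/
lemma minors_witness {S : Type*} [CommRing S] (p : Fin 4 → S) :
    minors ![![-p 1, p 0, 0, 0], ![-p 2, 0, p 0, 0], ![-p 3, 0, 0, p 0]] = (p 0) ^ 2 • p := by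
  ext j
  fin_cases j <;>
    simp [minors, Matrix.adjugate_apply, Matrix.det_succ_row_zero, Fin.sum_univ_succ,
      Matrix.updateRow_apply, Fin.succAbove, Pi.single_apply] <;> ring

lemma eval_smul_of_isHomogeneous_s8 {σ : Type*} {F : MvPolynomial σ ℂ} {d : ℕ}
    (hF : F.IsHomogeneous d) (c : ℂ) (v : σ → ℂ) : eval (c • v) F = c ^ d * eval v F := by
  rw [eval_eq, eval_eq, Finset.mul_sum]
  refine Finset.sum_congr rfl fun m hm => ?_
  have hd : ∑ i ∈ m.support, m i = d := by
    have := hF (mem_support_iff.mp hm)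
    rw [Finsupp.weight_apply] at this
    simpa [Finsupp.sum] using this
  simp only [Pi.smul_apply, smul_eq_mul, mul_pow, Finset.prod_mul_distrib,
    Finset.prod_pow_eq_pow_sum, hd]
  ring

/-- Four polynomials in three variables are algebraically dependent by transcendence degree; the
homogeneous components of a relation are relations, since they take values in pairwise distinct
degrees `n * d`. -/
lemma exists_homogeneous_relation {n : ℕ} (hn : 1 ≤ n) (f : Fin 4 → R3)
    (hf : ∀ j, (f j).IsHomogeneous n) :
    ∃ (d : ℕ) (F : MvPolynomial (Fin 4) ℂ), F ≠ 0 ∧ F.IsHomogeneous d ∧ aeval f F = 0 := by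
  have hdep : ¬ AlgebraicIndependent ℂ f := by
    intro h
    have := h.cardinalMk_le_trdeg
    rw [MvPolynomial.trdeg_of_isDomain] at this
    simp at this
    norm_cast at this
  rw [algebraicIndependent_iff] at hdep
  push Not at hdep
  obtain ⟨F, hF0, hFne⟩ := hdep
  obtain ⟨d, hd⟩ : ∃ d, homogeneousComponent d F ≠ 0 := by
    by_contra! h
    apply hFne
    rw [← sum_homogeneousComponent F]
    simp [h]
  refine ⟨d, homogeneousComponent d F, hd, homogeneousComponent_isHomogeneous d F, ?_⟩
  have hhom : ∀ e, (aeval f (homogeneousComponent e F)).IsHomogeneous (n * e) := fun e =>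
    (homogeneousComponent_isHomogeneous e F).aeval f hf
  have hcomp := congrArg (fun P => homogeneousComponent (n * d) (aeval f P))
    (sum_homogeneousComponent F)
  simp only [hF0, map_sum, map_zero] at hcomp
  have hdF : d ∈ Finset.range (F.totalDegree + 1) := by
    rw [Finset.mem_range]
    by_contra h
    exact hd (homogeneousComponent_eq_zero _ _ (by omega))
  rw [Finset.sum_eq_single_of_mem d hdF] at hcomp
  · rwa [homogeneousComponent_of_mem (hhom d), if_pos rfl] at hcomp
  · intro e _ hne
    rw [homogeneousComponent_of_mem (hhom e), if_neg]
    intro h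
    exact hne (Nat.eq_of_mul_eq_mul_left hn h).symm

theorem stmt8 (n : ℕ) (hn : 1 ≤ n) (x y z w : R3)
    (hx : x.IsHomogeneous n) (hy : y.IsHomogeneous n)
    (hz : z.IsHomogeneous n) (hw : w.IsHomogeneous n)
    -- `x, y, z, w` have no common factor
    (hcf : ∀ p : R3, p ∣ x → p ∣ y → p ∣ z → p ∣ w → IsUnit p) :
    ∃ G : MvPolynomial (Fin 3 × Fin 4) ℂ, G ≠ 0 ∧
      ∀ a : Fin 3 → Fin 4 → ℂ,
        MvPolynomial.eval (fun p : Fin 3 × Fin 4 => a p.1 p.2) G ≠ 0 →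
        {v : Fin 3 → ℂ |
            ∀ i : Fin 3,
              MvPolynomial.eval v (∑ j : Fin 4, MvPolynomial.C (a i j) * ![x, y, z, w] j) = 0} =
          {v : Fin 3 → ℂ |
            MvPolynomial.eval v x = 0 ∧ MvPolynomial.eval v y = 0 ∧
              MvPolynomial.eval v z = 0 ∧ MvPolynomial.eval v w = 0} := by
  obtain ⟨d, F, hF, hFd, hF0⟩ := exists_homogeneous_relation hn ![x, y, z, w] (by
    intro j
    fin_cases j <;> assumption)
  let G : MvPolynomial (Fin 3 × Fin 4) ℂ := aeval (minors fun i j => X (i, j)) F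
  have hG : ∀ a : Fin 3 → Fin 4 → ℂ,
      eval (fun p : Fin 3 × Fin 4 => a p.1 p.2) G = eval (minors a) F := by
    intro a
    have e : minors a = fun j => eval (fun p : Fin 3 × Fin 4 => a p.1 p.2)
        (minors (fun i j => X (i, j)) j) := by
      ext j
      rw [map_minors]
      simp
    simp only [G]
    rw [e, aeval_def, eval₂_eq', eval_eq' _ F]
    simp
  refine ⟨G, ?_, ?_⟩
  · intro h0
    obtain ⟨p, hp⟩ : ∃ p, eval p (X 0 * F) ≠ 0 := by
      by_contra! h
      exact mul_ne_zero (X_ne_zero 0) hF (MvPolynomial.funext fun p => by simpa using h p)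
    rw [map_mul, eval_X] at hp
    have h := hG ![![-p 1, p 0, 0, 0], ![-p 2, 0, p 0, 0], ![-p 3, 0, 0, p 0]]
    rw [h0, map_zero, minors_witness, eval_smul_of_isHomogeneous_s8 hFd] at h
    exact mul_ne_zero (pow_ne_zero _ (pow_ne_zero _ (left_ne_zero_of_mul hp)))
      (right_ne_zero_of_mul hp) h.symm
  · intro a ha
    rw [hG] at ha
    ext q
    simp only [Set.mem_ofPred_eq]
    constructor
    · intro h
      set v : Fin 4 → ℂ := fun j => eval q (![x, y, z, w] j) with hv
      suffices hv0 : ∀ j, v j = 0 from ⟨hv0 0, hv0 1, hv0 2, hv0 3⟩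
      by_contra! hne
      obtain ⟨j, hj⟩ := hne
      have hprop := minors_proportional a v (fun i => by simpa [hv] using h i)
      have hm : minors a = (minors a j / v j) • v := by
        ext i
        rw [Pi.smul_apply, smul_eq_mul, div_mul_eq_mul_div, eq_div_iff hj]
        exact (hprop i j).symm
      have hFv : eval v F = 0 := by
        have := congrArg (eval q) hF0
        rw [map_zero, aeval_def, eval₂_eq'] at this
        rw [eval_eq']
        simpa [hv] using this
      rw [hm, eval_smul_of_isHomogeneous_s8 hFd, hFv, mul_zero] at ha
      exact ha rfl
    · rintro ⟨h1, h2, h3, h4⟩ i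
      simp [Fin.sum_univ_succ, h1, h2, h3, h4]
end
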